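/- arXiv:1604.02419 — 9 statements merged into one kernel-verified Lean document; each statement's English description precedes it below -/
import Mathlib

section
/- Let R be a commutative ring, σ : R → R a ring automorphism with σ ∘ σ = id, and ξ ∈ R an element with ξ·σ(ξ) = 1. Let n ≥ 1 and let y ∈ Mₙ(R) be a matrix such that ȳ = −y (where ȳ denotes the entrywise application of σ to y) and such that the matrix 1 − y is invertible in Mₙ(R). Then the Cayley transform γ := ξ·(1 + y)·(1 − y)⁻¹ satisfies γ·γ̄ = 1 and γ̄·γ = 1. In other words, the Cayley transform c_ξ carries σ-skew matrices (the points of the Lie algebra 𝔰 of the symmetric space) into matrices γ with γγ̄ = 1 (the points of the symmetric space S). -/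
open Matrix

/-!
Let `f` be the entrywise action of `σ` and `u = 1 - y`. Skewness of `y` gives `f u = 1 + y` and
`f (f u) = u`, so the Cayley transform is `ξ • (f u * u⁻¹)`, and
`(f u * u⁻¹) * f (f u * u⁻¹) = f u * u⁻¹ * u * (f u)⁻¹ = 1`, as for the coboundaries in
Hilbert 90. The scalar contributes `ξ * σ ξ = 1`.
-/

/-- The symmetric space attached to a self-map `f` of a monoid: the elements `a` for which `f a` is
a two-sided inverse of `a`. It is meant for `f` multiplicative, such as `γ ↦ γ̄` on matrices; both
one-sided identities are required because `M` need not be Dedekind-finite. -/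
def symmetricSpace {M : Type*} [Monoid M] (f : M → M) : Set M :=
  {a | a * f a = 1 ∧ f a * a = 1}

theorem map_mul_units_inv_mem_symmetricSpace {M F : Type*} [Monoid M] [FunLike F M M]
    [MonoidHomClass F M M] (f : F) (u : Mˣ) (hu : f (f u) = u) :
    f u * (u⁻¹ : Mˣ) ∈ symmetricSpace f := by
  have map_quotient : f (f u * (u⁻¹ : Mˣ)) = u * f (u⁻¹ : Mˣ) := by rw [map_mul, hu]
  have map_mul_map_inv : f u * f (u⁻¹ : Mˣ) = 1 := by rw [← map_mul, u.mul_inv, map_one]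
  have map_inv_mul_map : f (u⁻¹ : Mˣ) * f u = 1 := by rw [← map_mul, u.inv_mul, map_one]
  constructor
  · rw [map_quotient, mul_assoc, u.inv_mul_cancel_left, map_mul_map_inv]
  · rw [map_quotient, mul_assoc, ← mul_assoc (f _), map_inv_mul_map, one_mul, u.mul_inv]

theorem smul_mem_symmetricSpace {S M : Type*} [Monoid S] [Monoid M] [MulAction S M]
    [IsScalarTower S M M] [SMulCommClass S M M] {σ : S → S} {f : M → M}
    (hf : ∀ (s : S) (a : M), f (s • a) = σ s • f a) {s : S} {a : M}
    (hs : s ∈ symmetricSpace σ) (ha : a ∈ symmetricSpace f) : s • a ∈ symmetricSpace f := by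
  constructor
  · rw [hf, smul_mul_smul_comm, hs.1, ha.1, one_smul]
  · rw [hf, smul_mul_smul_comm, hs.2, ha.2, one_smul]

theorem one_add_mul_inverse_one_sub_mem_symmetricSpace {A F : Type*} [Ring A] [FunLike F A A]
    [RingHomClass F A A] (f : F) {y : A} (hy : f y = -y) (hunit : IsUnit (1 - y)) :
    (1 + y) * Ring.inverse (1 - y) ∈ symmetricSpace f := by
  have map_one_sub : f (1 - y) = 1 + y := by rw [map_sub, map_one, hy, sub_neg_eq_add]
  have map_one_add : f (1 + y) = 1 - y := by rw [map_add, map_one, hy, sub_eq_add_neg]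
  obtain ⟨u, hu⟩ := hunit
  have hfixed : f (f u) = u := by rw [hu, map_one_sub, map_one_add]
  rw [← map_one_sub, ← hu, Ring.inverse_unit]
  exact map_mul_units_inv_mem_symmetricSpace f u hfixed

theorem cayley_transform_mem_symmetric_space_general
    {R m : Type*} [CommRing R] [Fintype m] [DecidableEq m] (σ : R →+* R)
    {ξ : R} (hξ : ξ * σ ξ = 1) {y : Matrix m m R} (hy : y.map σ = -y) (hinv : IsUnit (1 - y)) :
    ξ • ((1 + y) * (1 - y)⁻¹) ∈ symmetricSpace fun γ : Matrix m m R ↦ γ.map σ := by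
  have hξ_mem : ξ ∈ symmetricSpace σ := ⟨hξ, by rw [mul_comm, hξ]⟩
  rw [nonsing_inv_eq_ringInverse]
  exact smul_mem_symmetricSpace (fun s γ ↦ Matrix.map_smul' σ s γ (map_mul σ)) hξ_mem
    (one_add_mul_inverse_one_sub_mem_symmetricSpace σ.mapMatrix hy hinv)

/-- The Cayley transform `c_ξ(y) = ξ(1+y)(1-y)⁻¹` carries σ-skew matrices (points of the
Lie algebra 𝔰) into matrices `γ` with `γ·γ̄ = 1` (points of the symmetric space `S`). -/
theorem cayley_transform_mem_symmetric_space
    {R : Type*} [CommRing R] (σ : R ≃+* R) (hσ : ∀ x, σ (σ x) = x)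
    (ξ : R) (hξ : ξ * σ ξ = 1)
    (n : ℕ) (hn : 1 ≤ n)
    (y : Matrix (Fin n) (Fin n) R)
    (hy : y.map σ = -y)
    (hinv : IsUnit (1 - y)) :
    (ξ • ((1 + y) * (1 - y)⁻¹)) * ((ξ • ((1 + y) * (1 - y)⁻¹)).map σ) = 1 ∧
    ((ξ • ((1 + y) * (1 - y)⁻¹)).map σ) * (ξ • ((1 + y) * (1 - y)⁻¹)) = 1 :=
  cayley_transform_mem_symmetric_space_general (σ : R →+* R) hξ hy hinv
end

section
/- Let O be a commutative ring in which 2 is invertible, σ : O → O a ring automorphism with σ ∘ σ = id, ξ ∈ O with ξ·σ(ξ) = 1, I ⊆ O an ideal, and n ≥ 2. Define the sets 𝔨'° := { y ∈ Mₙ(O) : ȳ = −y, det(1 − y) is a unit of O, and the entry y_{i,n} lies in I for every 1 ≤ i ≤ n−1 } and K'° := { γ ∈ Mₙ(O) : γ·γ̄ = 1, det(γ + ξ·1) is a unit of O, and the entry γ_{i,n} lies in I for every 1 ≤ i ≤ n−1 }. Then the Cayley transform y ↦ ξ·(1 + y)·(1 − y)⁻¹ is a well-defined bijection from 𝔨'°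 onto K'°, with inverse γ ↦ (γ − ξ·1)·(γ + ξ·1)⁻¹. (In particular, the Cayley transform preserves the congruence condition of being block lower triangular modulo I with respect to the block decomposition n = (n−1) + 1.) -/
open Matrix
open scoped Ring

/-!
Clearing denominators, `γ = c_ξ(y)` reads `γ (1 - y) = ξ (1 + y)`, which gives
`(γ + ξ) (1 - y) = 2ξ` and `(γ - ξ) (1 - y) = 2ξ y`. Since `2ξ` is a unit, `γ + ξ` is a unit along
with `1 - y`, and `y` is recovered as `(γ - ξ) (γ + ξ)⁻¹`. A `σ`-semilinear ring endomorphism `τ`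
with `τ y = -y` exchanges `1 + y` and `1 - y`, so `τ γ` is the inverse of `γ`; conversely, if
`γ τ(γ) = 1` and `ξ σ(ξ) = 1`, then `τ (γ ± ξ) = ± (γ ± ξ) σ(ξ) τ(γ)`, so that `τ` negates the
quotient. Both transforms are rational expressions, hence preserve every subalgebra stable under
inversion. The matrices that are block triangular modulo `I` form such a subalgebra, because the
inverse of a block triangular matrix over `O ⧸ I` is block triangular.
-/

section CayleyTransform

variable {O A : Type*} [CommRing O] [Ring A] [Algebra O A]

/-- The Cayley transform `c_ξ(y) = ξ (1 + y) (1 - y)⁻¹` in an arbitrary algebra. The inverse is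
`Ring.inverse`, so the value is `0` when `1 - y` is not a unit. -/
noncomputable def cayleyTransform (ξ : O) (y : A) : A :=
  ξ • ((1 + y) * (1 - y)⁻¹ʳ)

/-- The inverse Cayley transform `(γ - ξ) (γ + ξ)⁻¹` in an arbitrary algebra, with value `0` when
`γ + ξ` is not a unit. -/
noncomputable def cayleyTransformInv (ξ : O) (γ : A) : A :=
  (γ - ξ • 1) * (γ + ξ • 1)⁻¹ʳ

variable {ξ : O} {y γ : A}

theorem cayleyTransform_mul_one_sub (hy : IsUnit (1 - y)) :
    cayleyTransform ξ y * (1 - y) = ξ • (1 + y) := by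
  rw [cayleyTransform, smul_mul_assoc, Ring.inverse_mul_cancel_right _ _ hy]

theorem cayleyTransform_add_mul_one_sub (hy : IsUnit (1 - y)) :
    (cayleyTransform ξ y + ξ • 1) * (1 - y) = (2 * ξ) • 1 := by
  rw [add_mul, cayleyTransform_mul_one_sub hy, smul_one_mul]
  module

theorem cayleyTransform_sub_mul_one_sub (hy : IsUnit (1 - y)) :
    (cayleyTransform ξ y - ξ • 1) * (1 - y) = (2 * ξ) • y := by
  rw [sub_mul, cayleyTransform_mul_one_sub hy, smul_one_mul]
  module

theorem cayleyTransformInv_mul_add (hγ : IsUnit (γ + ξ • 1)) :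
    cayleyTransformInv ξ γ * (γ + ξ • 1) = γ - ξ • 1 :=
  Ring.inverse_mul_cancel_right _ _ hγ

theorem one_sub_cayleyTransformInv_mul_add (hγ : IsUnit (γ + ξ • 1)) :
    (1 - cayleyTransformInv ξ γ) * (γ + ξ • 1) = (2 * ξ) • 1 := by
  rw [sub_mul, cayleyTransformInv_mul_add hγ, one_mul]
  module

theorem one_add_cayleyTransformInv_mul_add (hγ : IsUnit (γ + ξ • 1)) :
    (1 + cayleyTransformInv ξ γ) * (γ + ξ • 1) = (2 : O) • γ := by
  rw [add_mul, cayleyTransformInv_mul_add hγ, one_mul]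
  module

theorem isUnit_of_mul_eq_smul_one {c : O} {a u : A} (hc : IsUnit c) (hu : IsUnit u)
    (h : a * u = c • 1) : IsUnit a := by
  rw [Algebra.smul_def, mul_one] at h
  exact hu.mul_right_iff.mp (h ▸ hc.map (algebraMap O A))

theorem isUnit_cayleyTransform_add (h2 : IsUnit (2 : O)) (hξ : IsUnit ξ) (hy : IsUnit (1 - y)) :
    IsUnit (cayleyTransform ξ y + ξ • 1) :=
  isUnit_of_mul_eq_smul_one (h2.mul hξ) hy (cayleyTransform_add_mul_one_sub hy)

theorem isUnit_one_sub_cayleyTransformInv (h2 : IsUnit (2 : O)) (hξ : IsUnit ξ)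
    (hγ : IsUnit (γ + ξ • 1)) : IsUnit (1 - cayleyTransformInv ξ γ) :=
  isUnit_of_mul_eq_smul_one (h2.mul hξ) hγ (one_sub_cayleyTransformInv_mul_add hγ)

theorem cayleyTransformInv_cayleyTransform (h2 : IsUnit (2 : O)) (hξ : IsUnit ξ)
    (hy : IsUnit (1 - y)) : cayleyTransformInv ξ (cayleyTransform ξ y) = y := by
  have hunit := isUnit_cayleyTransform_add h2 hξ hy
  apply hunit.mul_right_cancel
  apply hy.mul_right_cancel
  rw [cayleyTransformInv_mul_add hunit, cayleyTransform_sub_mul_one_sub hy, mul_assoc,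
    cayleyTransform_add_mul_one_sub hy, mul_smul_one]

theorem cayleyTransform_cayleyTransformInv (h2 : IsUnit (2 : O)) (hξ : IsUnit ξ)
    (hγ : IsUnit (γ + ξ • 1)) : cayleyTransform ξ (cayleyTransformInv ξ γ) = γ := by
  have hunit := isUnit_one_sub_cayleyTransformInv h2 hξ hγ
  apply hunit.mul_right_cancel
  apply hγ.mul_right_cancel
  rw [cayleyTransform_mul_one_sub hunit, smul_mul_assoc, one_add_cayleyTransformInv_mul_add hγ,
    mul_assoc, one_sub_cayleyTransformInv_mul_add hγ, mul_smul_one, smul_smul, mul_comm]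

section Semilinear

variable {σ : O →+* O} {τ : A →+* A}

theorem cayleyTransform_mul_map (hτ : ∀ (c : O) (a : A), τ (c • a) = σ c • τ a)
    (hξ : ξ * σ ξ = 1) (hy : IsUnit (1 - y)) (hskew : τ y = -y) :
    cayleyTransform ξ y * τ (cayleyTransform ξ y) = 1 := by
  have hmap_one_sub : τ (1 - y) = 1 + y := by rw [map_sub, map_one, hskew, sub_neg_eq_add]
  have hmap_one_add : τ (1 + y) = 1 - y := by rw [map_add, map_one, hskew, sub_eq_add_neg]
  apply (hy.map τ).mul_right_cancel
  calc cayleyTransform ξ y * τ (cayleyTransform ξ y) * τ (1 - y)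
      = cayleyTransform ξ y * τ (ξ • (1 + y)) := by
        rw [mul_assoc, ← map_mul, cayleyTransform_mul_one_sub hy]
    _ = σ ξ • ξ • (1 + y) := by
        rw [hτ, hmap_one_add, mul_smul_comm, cayleyTransform_mul_one_sub hy]
    _ = 1 * τ (1 - y) := by rw [smul_smul, mul_comm, hξ, one_smul, one_mul, hmap_one_sub]

theorem map_cayleyTransformInv (hτ : ∀ (c : O) (a : A), τ (c • a) = σ c • τ a)
    (hξ : ξ * σ ξ = 1) (hγ : IsUnit (γ + ξ • 1)) (hsymm : γ * τ γ = 1) :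
    τ (cayleyTransformInv ξ γ) = -cayleyTransformInv ξ γ := by
  have hmap_smul_one : τ (ξ • 1) = σ ξ • 1 := by rw [hτ, map_one]
  have hmap_add : τ (γ + ξ • 1) = (γ + ξ • 1) * σ ξ • τ γ := by
    rw [map_add, hmap_smul_one, add_mul, mul_smul_comm, hsymm, smul_mul_smul_comm, hξ, one_smul,
      one_mul, add_comm]
  have hmap_sub : τ (γ - ξ • 1) = -((γ - ξ • 1) * σ ξ • τ γ) := by
    rw [map_sub, hmap_smul_one, sub_mul, mul_smul_comm, hsymm, smul_mul_smul_comm, hξ, one_smul,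
      one_mul, neg_sub]
  apply (hγ.map τ).mul_right_cancel
  calc τ (cayleyTransformInv ξ γ) * τ (γ + ξ • 1)
      = τ (γ - ξ • 1) := by rw [← map_mul, cayleyTransformInv_mul_add hγ]
    _ = -(cayleyTransformInv ξ γ * (γ + ξ • 1) * σ ξ • τ γ) := by
        rw [hmap_sub, cayleyTransformInv_mul_add hγ]
    _ = -cayleyTransformInv ξ γ * τ (γ + ξ • 1) := by rw [hmap_add, neg_mul, mul_assoc]

end Semilinear

section Subalgebra

variable {B : Subalgebra O A}

theorem cayleyTransform_mem (hB : ∀ a ∈ B, a⁻¹ʳ ∈ B) (hy : y ∈ B) : cayleyTransform ξ y ∈ B :=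
  B.smul_mem (mul_mem (add_mem (one_mem B) hy) (hB _ (sub_mem (one_mem B) hy))) ξ

theorem cayleyTransformInv_mem (hB : ∀ a ∈ B, a⁻¹ʳ ∈ B) (hγ : γ ∈ B) :
    cayleyTransformInv ξ γ ∈ B :=
  have hscalar : ξ • 1 ∈ B := B.smul_mem (one_mem B) ξ
  mul_mem (sub_mem hγ hscalar) (hB _ (add_mem hγ hscalar))

end Subalgebra

end CayleyTransform

section BlockTriangularMod

variable {O m α : Type*} [CommRing O] [Fintype m] [DecidableEq m] [LinearOrder α]

/-- The matrices over `O` that are block triangular modulo `I` for the block labelling `b`: those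
whose reduction modulo `I` satisfies `Matrix.BlockTriangular`. The Cayley transform
preserves this congruence condition because the subalgebra is stable under inversion. -/
def blockTriangularModSubalgebra (I : Ideal O) (b : m → α) : Subalgebra O (Matrix m m O) :=
  (blockTriangularSubalgebra O (O ⧸ I) b).comap (Ideal.Quotient.mkₐ O I).mapMatrix

theorem mem_blockTriangularModSubalgebra {I : Ideal O} {b : m → α} {M : Matrix m m O} :
    M ∈ blockTriangularModSubalgebra I b ↔ ∀ i j, b j < b i → M i j ∈ I := by
  simp [blockTriangularModSubalgebra, BlockTriangular, Ideal.Quotient.eq_zero_iff_mem]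

theorem inverse_mem_blockTriangularModSubalgebra {I : Ideal O} {b : m → α} {M : Matrix m m O}
    (hM : M ∈ blockTriangularModSubalgebra I b) : M⁻¹ʳ ∈ blockTriangularModSubalgebra I b := by
  by_cases hunit : IsUnit M
  · let reduction := (Ideal.Quotient.mkₐ O I).mapMatrix (m := m)
    have hinv : reduction M⁻¹ʳ = (reduction M)⁻¹ :=
      (inv_eq_left_inv (by rw [← map_mul, Ring.inverse_mul_cancel _ hunit, map_one])).symm
    have : Invertible (reduction M) := (hunit.map reduction).invertible
    change (reduction M⁻¹ʳ).BlockTriangular b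
    rw [hinv]
    exact blockTriangular_inv_of_blockTriangular hM
  · rw [Ring.inverse_non_unit _ hunit]
    exact zero_mem _

end BlockTriangularMod

/-- The block labelling of the decomposition `n = (n - 1) + 1`. The last index gets the smaller
label, so that block triangularity constrains the entries above it in its column. -/
def lastBlockLabel (n : ℕ) (i : Fin n) : Bool :=
  decide ((i : ℕ) < n - 1)

theorem lastBlockLabel_lt_iff {n : ℕ} (hn : 0 < n) {i j : Fin n} :
    lastBlockLabel n j < lastBlockLabel n i ↔
      j = ⟨n - 1, Nat.sub_one_lt_of_lt hn⟩ ∧ (i : ℕ) < n - 1 := by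
  simp only [lastBlockLabel, Bool.lt_iff, decide_eq_false_iff_not, decide_eq_true_iff, Fin.ext_iff]
  omega

theorem cayley_transform_bijection_congruence_general
    {O m α : Type*} [CommRing O] [Fintype m] [DecidableEq m] [LinearOrder α]
    (h2 : IsUnit (2 : O)) (σ : O →+* O) (ξ : O) (hξ : ξ * σ ξ = 1)
    (I : Ideal O) (b : m → α) :
    let 𝔨 : Set (Matrix m m O) :=
      { y | y.map σ = -y ∧ IsUnit (1 - y).det ∧ ∀ i j, b j < b i → y i j ∈ I }
    let K : Set (Matrix m m O) :=
      { γ | γ * γ.map σ = 1 ∧ IsUnit (γ + ξ • 1).det ∧ ∀ i j, b j < b i → γ i j ∈ I }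
    let f : Matrix m m O → Matrix m m O := fun y => ξ • ((1 + y) * (1 - y)⁻¹)
    let g : Matrix m m O → Matrix m m O := fun γ => (γ - ξ • 1) * (γ + ξ • 1)⁻¹
    Set.MapsTo f 𝔨 K ∧ Set.MapsTo g K 𝔨 ∧
      (∀ y ∈ 𝔨, g (f y) = y) ∧ (∀ γ ∈ K, f (g γ) = γ) := by
  have hunit : IsUnit ξ := .of_mul_eq_one _ hξ
  have hsemilinear (c : O) (M : Matrix m m O) : σ.mapMatrix (c • M) = σ c • σ.mapMatrix M :=
    Matrix.map_smul' σ c M (map_mul σ)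
  have hinverse : ∀ M ∈ blockTriangularModSubalgebra I b,
      M⁻¹ʳ ∈ blockTriangularModSubalgebra I b :=
    fun _ => inverse_mem_blockTriangularModSubalgebra
  simp only [← isUnit_iff_isUnit_det, nonsing_inv_eq_ringInverse,
    ← mem_blockTriangularModSubalgebra]
  refine ⟨?_, ?_, ?_, ?_⟩
  · rintro y ⟨hskew, hy, hmem⟩
    exact ⟨cayleyTransform_mul_map hsemilinear hξ hy hskew, isUnit_cayleyTransform_add h2 hunit hy,
      cayleyTransform_mem hinverse hmem⟩
  · rintro γ ⟨hsymm, hγ, hmem⟩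
    exact ⟨map_cayleyTransformInv hsemilinear hξ hγ hsymm,
      isUnit_one_sub_cayleyTransformInv h2 hunit hγ, cayleyTransformInv_mem hinverse hmem⟩
  · rintro y ⟨-, hy, -⟩
    exact cayleyTransformInv_cayleyTransform h2 hunit hy
  · rintro γ ⟨-, hγ, -⟩
    exact cayleyTransform_cayleyTransformInv h2 hunit hγ

/-- The Cayley transform is a bijection from the σ-skew matrices that are congruent to a
block lower triangular matrix modulo `I` (for the block decomposition `n = (n-1) + 1`) and
have `det (1 - y)` a unit, onto the symmetric-space elements that are congruent to a block
lower triangular matrix modulo `I` and have `det (γ + ξ)` a unit; the inverse bijection is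
`γ ↦ (γ - ξ)(γ + ξ)⁻¹`. -/
theorem cayley_transform_bijection_congruence
    {O : Type*} [CommRing O] (h2 : IsUnit (2 : O))
    (σ : O ≃+* O) (hσ : ∀ x, σ (σ x) = x)
    (ξ : O) (hξ : ξ * σ ξ = 1)
    (I : Ideal O) (n : ℕ) (hn : 2 ≤ n) :
    let lastIdx : Fin n := ⟨n - 1, by omega⟩
    let 𝔨 : Set (Matrix (Fin n) (Fin n) O) :=
      { y | y.map σ = -y ∧ IsUnit (1 - y).det ∧
            ∀ i : Fin n, (i : ℕ) < n - 1 → y i lastIdx ∈ I }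
    let K : Set (Matrix (Fin n) (Fin n) O) :=
      { γ | γ * γ.map σ = 1 ∧ IsUnit (γ + ξ • 1).det ∧
            ∀ i : Fin n, (i : ℕ) < n - 1 → γ i lastIdx ∈ I }
    let f : Matrix (Fin n) (Fin n) O → Matrix (Fin n) (Fin n) O :=
      fun y => ξ • ((1 + y) * (1 - y)⁻¹)
    let g : Matrix (Fin n) (Fin n) O → Matrix (Fin n) (Fin n) O :=
      fun γ => (γ - ξ • 1) * (γ + ξ • 1)⁻¹
    Set.MapsTo f 𝔨 K ∧ Set.MapsTo g K 𝔨 ∧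
      (∀ y ∈ 𝔨, g (f y) = y) ∧ (∀ γ ∈ K, f (g γ) = γ) := by
  simpa only [lastBlockLabel_lt_iff (Nat.zero_lt_of_lt hn), and_imp, forall_eq, RingHom.coe_coe]
    using cayley_transform_bijection_congruence_general h2 (σ : O →+* O) ξ hξ I (lastBlockLabel n)
end

section
/- Let O be an integrally closed domain with fraction field F, and suppose that 2 is a unit of O; let ξ be a unit of O and n ≥ 1. Define Y := { y ∈ Mₙ(F) : every coefficient of the characteristic polynomial of y lies in O, and det(1 − y) is a unit of O } (the strongly integral matrices) and Γ := { γ ∈ Mₙ(F) : every coefficient of the characteristic polynomial of γ lies in O, and det(γ + ξ·1) is a unit of O } (the ξ-strongly integral matrices). Then the Cayley transform y ↦ ξ·(1 + y)·(1 − y)⁻¹ is a well-defined bijection from Y onto Γ, with inverse γ ↦ (γ − ξ·1)·(γ + ξ·1)⁻¹; moreover, for y ∈ Y one has det(c_ξ(y) + ξ·1)·det(1 − y) = (2ξ)ⁿ. -/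
open Matrix

/-!
In the coordinates `z = 1 - y` and `w = γ + ξ` the Cayley transform is `w = 2ξ z⁻¹`, because
`ξ(1 + y) + ξ(1 - y) = 2ξ`, and its inverse is `z = 2ξ w⁻¹`. Having a characteristic polynomial
with coefficients in `O` is invariant under translation and scaling by elements of `O`. It is also
invariant under inversion of a matrix whose determinant is a unit of `O`, because the
characteristic polynomial of `z⁻¹` is, up to this unit and a sign, the reversal of that of `z`.
-/

open Polynomial

section Polynomial

variable {R S : Type*} [Semiring R] [Semiring S] {f : R →+* S} {p q : S[X]}

lemma comp_mem_lifts (hp : p ∈ lifts f) (hq : q ∈ lifts f) : p.comp q ∈ lifts f := by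
  obtain ⟨p, rfl⟩ := (mem_lifts _).1 hp
  obtain ⟨q, rfl⟩ := (mem_lifts _).1 hq
  exact (mem_lifts _).2 ⟨p.comp q, Polynomial.map_comp f p q⟩

lemma reverse_mem_lifts (hp : p ∈ lifts f) : p.reverse ∈ lifts f := by
  rw [lifts_iff_coeff_lifts] at hp ⊢
  intro k
  rw [coeff_reverse]
  exact hp _

lemma scaleRoots_mem_lifts (hp : p ∈ lifts f) (c : R) : p.scaleRoots (f c) ∈ lifts f := by
  rw [lifts_iff_coeff_lifts] at hp ⊢
  intro k
  obtain ⟨a, ha⟩ := hp k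
  exact ⟨a * c ^ (p.natDegree - k), by rw [coeff_scaleRoots, ← ha, map_mul, map_pow]⟩

end Polynomial

section Charpoly

variable {n R : Type*} [Fintype n] [DecidableEq n] [CommRing R]

lemma charpolyRev_smul (c : R) (M : Matrix n n R) :
    (c • M).charpolyRev = M.charpolyRev.comp (C c * X) := by
  have hmap : (compRingHom (C c * X)).mapMatrix (1 - (X : R[X]) • M.map C) =
      1 - (X : R[X]) • (c • M).map C := by
    ext1 i j
    by_cases hij : i = j <;> simp [hij] <;> ring
  rw [charpolyRev, ← hmap, ← RingHom.map_det, coe_compRingHom_apply, charpolyRev]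

lemma coeff_charpoly_eq_coeff_charpolyRev (M : Matrix n n R) {k : ℕ} (hk : k ≤ Fintype.card n) :
    M.charpoly.coeff k = M.charpolyRev.coeff (Fintype.card n - k) := by
  nontriviality R
  rw [← reverse_charpoly, coeff_reverse, charpoly_natDegree_eq_dim,
    revAt_le (Nat.sub_le _ _), Nat.sub_sub_self hk]

lemma charpoly_smul (c : R) (M : Matrix n n R) :
    (c • M).charpoly = M.charpoly.scaleRoots c := by
  nontriviality R
  ext k
  rw [coeff_scaleRoots, charpoly_natDegree_eq_dim]
  rcases le_or_gt k (Fintype.card n) with hk | hk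
  · rw [coeff_charpoly_eq_coeff_charpolyRev _ hk, coeff_charpoly_eq_coeff_charpolyRev _ hk,
      charpolyRev_smul, comp_C_mul_X_coeff]
  · rw [coeff_eq_zero_of_natDegree_lt (by rwa [charpoly_natDegree_eq_dim]),
      coeff_eq_zero_of_natDegree_lt (by rwa [charpoly_natDegree_eq_dim]), zero_mul]

end Charpoly

section Integral

variable {n O R : Type*} [Fintype n] [DecidableEq n] [CommRing O] [CommRing R] [Algebra O R]

variable (O) in
/-- The paper's integral matrices: all coefficients of the characteristic polynomial come from
`O`. -/
def HasIntegralCharpoly (M : Matrix n n R) : Prop :=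
  ∀ k, M.charpoly.coeff k ∈ (algebraMap O R).range

variable (O) in
/-- Integral matrices whose determinant is a unit of `O`, the common form of strong and
`ξ`-strong integrality after translating by a scalar. -/
def IsIntegralWithUnitDet (M : Matrix n n R) : Prop :=
  HasIntegralCharpoly O M ∧ ∃ u : Oˣ, algebraMap O R u = M.det

lemma inverse_algebraMap_unit (u : Oˣ) :
    Ring.inverse (algebraMap O R u) = algebraMap O R ↑u⁻¹ :=
  Ring.inverse_unit (Units.map (algebraMap O R : O →* R) u)

lemma hasIntegralCharpoly_iff_mem_lifts {M : Matrix n n R} :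
    HasIntegralCharpoly O M ↔ M.charpoly ∈ lifts (algebraMap O R) :=
  (lifts_iff_coeff_lifts _).symm

namespace HasIntegralCharpoly

variable {M : Matrix n n R}

lemma smul (hM : HasIntegralCharpoly O M) (c : O) :
    HasIntegralCharpoly O (algebraMap O R c • M) := by
  rw [hasIntegralCharpoly_iff_mem_lifts] at hM ⊢
  rw [charpoly_smul]
  exact scaleRoots_mem_lifts hM c

lemma sub_smul_one (hM : HasIntegralCharpoly O M) (c : O) :
    HasIntegralCharpoly O (M - algebraMap O R c • 1) := by
  rw [hasIntegralCharpoly_iff_mem_lifts] at hM ⊢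
  rw [smul_one_eq_diagonal, ← scalar_apply, charpoly_sub_scalar]
  exact comp_mem_lifts hM (add_mem (X_mem_lifts _) (C_mem_lifts _ c))

lemma inv (hM : HasIntegralCharpoly O M) {u : Oˣ} (hu : algebraMap O R u = M.det) :
    HasIntegralCharpoly O M⁻¹ := by
  have hunit : IsUnit M := (isUnit_iff_isUnit_det M).2 (hu ▸ u.isUnit.map _)
  have hsign : (-1 : R[X]) ∈ lifts (algebraMap O R) := by
    simpa using C_mem_lifts (algebraMap O R) (-1)
  rw [hasIntegralCharpoly_iff_mem_lifts] at hM ⊢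
  rw [charpoly_inv M hunit, ← hu, inverse_algebraMap_unit, ← reverse_charpoly]
  exact mul_mem (mul_mem (pow_mem hsign _) (C_mem_lifts _ _)) (reverse_mem_lifts hM)

end HasIntegralCharpoly

lemma hasIntegralCharpoly_add_smul_one_iff (c : O) {M : Matrix n n R} :
    HasIntegralCharpoly O (M + algebraMap O R c • 1) ↔ HasIntegralCharpoly O M :=
  ⟨fun h => by simpa using h.sub_smul_one c, fun h => by simpa using h.sub_smul_one (-c)⟩

lemma hasIntegralCharpoly_one_sub_iff {M : Matrix n n R} :
    HasIntegralCharpoly O (1 - M) ↔ HasIntegralCharpoly O M := by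
  have one_sub {N : Matrix n n R} (hN : HasIntegralCharpoly O N) :
      HasIntegralCharpoly O (1 - N) := by
    simpa using (hN.sub_smul_one 1).smul (-1)
  exact ⟨fun h => by simpa using one_sub h, one_sub⟩

namespace IsIntegralWithUnitDet

variable {M : Matrix n n R}

lemma isUnit_det (hM : IsIntegralWithUnitDet O M) : IsUnit M.det := by
  obtain ⟨-, u, hu⟩ := hM
  exact hu ▸ u.isUnit.map _

lemma smul (hM : IsIntegralWithUnitDet O M) {c : O} (hc : IsUnit c) :
    IsIntegralWithUnitDet O (algebraMap O R c • M) := by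
  obtain ⟨hint, u, hu⟩ := hM
  obtain ⟨c, rfl⟩ := hc
  refine ⟨hint.smul c, c ^ Fintype.card n * u, ?_⟩
  rw [det_smul, ← hu, Units.val_mul, Units.val_pow_eq_pow_val, map_mul, map_pow]

lemma inv (hM : IsIntegralWithUnitDet O M) : IsIntegralWithUnitDet O M⁻¹ := by
  obtain ⟨hint, u, hu⟩ := hM
  refine ⟨hint.inv hu, u⁻¹, ?_⟩
  rw [det_nonsing_inv, ← hu, inverse_algebraMap_unit]

end IsIntegralWithUnitDet

variable (O n R) in
/-- The paper's strongly integral matrices `Y`, the domain of the Cayley transform. A unit of `O` is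
encoded as the image in `R` of an element of `Oˣ`. -/
def stronglyIntegral : Set (Matrix n n R) :=
  {y | HasIntegralCharpoly O y ∧ ∃ u : Oˣ, algebraMap O R u = (1 - y).det}

variable (n R) in
/-- The paper's `ξ`-strongly integral matrices `Γ`, the range of the Cayley transform. A unit of `O`
is encoded as the image in `R` of an element of `Oˣ`. -/
def xiStronglyIntegral (ξ : O) : Set (Matrix n n R) :=
  {γ | HasIntegralCharpoly O γ ∧ ∃ u : Oˣ, algebraMap O R u = (γ + algebraMap O R ξ • 1).det}

lemma mem_stronglyIntegral_iff {y : Matrix n n R} :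
    y ∈ stronglyIntegral n O R ↔ IsIntegralWithUnitDet O (1 - y) :=
  and_congr_left' hasIntegralCharpoly_one_sub_iff.symm

lemma mem_xiStronglyIntegral_iff {ξ : O} {γ : Matrix n n R} :
    γ ∈ xiStronglyIntegral n R ξ ↔ IsIntegralWithUnitDet O (γ + algebraMap O R ξ • 1) :=
  and_congr_left' (hasIntegralCharpoly_add_smul_one_iff ξ).symm

end Integral

section SmulInv

variable {n R : Type*} [Fintype n] [DecidableEq n] [CommRing R] {c : R} {M : Matrix n n R}

lemma isUnit_det_smul_inv (hc : IsUnit c) (hM : IsUnit M.det) :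
    IsUnit (c • M⁻¹).det := by
  rw [det_smul]
  exact (hc.pow _).mul (M.isUnit_nonsing_inv_det hM)

lemma smul_inv_smul_inv (hc : IsUnit c) (hM : IsUnit M.det) :
    c • (c • M⁻¹)⁻¹ = M := by
  obtain ⟨c, rfl⟩ := hc
  change c • (c • M⁻¹)⁻¹ = M
  rw [inv_smul' _ c (M.isUnit_nonsing_inv_det hM), nonsing_inv_nonsing_inv _ hM, smul_inv_smul]

end SmulInv

section Cayley

variable {n R : Type*} [Fintype n] [DecidableEq n] [CommRing R]

/-- The Cayley transform `c_ξ`, with a junk value where `1 - y` is not invertible. -/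
noncomputable def cayley (ξ : R) (y : Matrix n n R) : Matrix n n R :=
  ξ • ((1 + y) * (1 - y)⁻¹)

/-- The inverse of the Cayley transform `c_ξ`, with a junk value where `γ + ξ` is not
invertible. -/
noncomputable def cayleyInv (ξ : R) (γ : Matrix n n R) : Matrix n n R :=
  (γ - ξ • 1) * (γ + ξ • 1)⁻¹

variable {ξ : R} {y γ : Matrix n n R}

lemma cayley_add_smul_one (ξ : R) (hy : IsUnit (1 - y).det) :
    cayley ξ y + ξ • 1 = (2 * ξ) • (1 - y)⁻¹ := by
  calc cayley ξ y + ξ • 1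
      = ξ • ((1 + y) * (1 - y)⁻¹) + ξ • ((1 - y) * (1 - y)⁻¹) := by
        rw [mul_nonsing_inv _ hy, cayley]
    _ = ξ • (((1 + y) + (1 - y)) * (1 - y)⁻¹) := by rw [← smul_add, ← add_mul]
    _ = (2 * ξ) • (1 - y)⁻¹ := by
        rw [add_add_sub_cancel, one_add_one_eq_two, two_mul, two_mul, add_smul, smul_add]

lemma one_sub_cayleyInv (hγ : IsUnit (γ + ξ • 1).det) :
    1 - cayleyInv ξ γ = (2 * ξ) • (γ + ξ • 1)⁻¹ := by
  calc 1 - cayleyInv ξ γ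
      = (γ + ξ • 1) * (γ + ξ • 1)⁻¹ - (γ - ξ • 1) * (γ + ξ • 1)⁻¹ := by
        rw [mul_nonsing_inv _ hγ, cayleyInv]
    _ = ((2 * ξ) • 1) * (γ + ξ • 1)⁻¹ := by
        rw [← sub_mul]
        congr 1
        module
    _ = (2 * ξ) • (γ + ξ • 1)⁻¹ := by rw [smul_mul_assoc, one_mul]

lemma det_cayley_add_smul_one_mul_det_one_sub (ξ : R) (hy : IsUnit (1 - y).det) :
    (cayley ξ y + ξ • 1).det * (1 - y).det = (2 * ξ) ^ Fintype.card n := by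
  rw [cayley_add_smul_one ξ hy, det_smul, mul_assoc, det_nonsing_inv_mul_det _ hy, mul_one]

lemma cayleyInv_cayley (hξ : IsUnit (2 * ξ)) (hy : IsUnit (1 - y).det) :
    cayleyInv ξ (cayley ξ y) = y := by
  have hadd := cayley_add_smul_one ξ hy
  have hsub : 1 - cayleyInv ξ (cayley ξ y) = 1 - y := by
    rw [one_sub_cayleyInv (hadd ▸ isUnit_det_smul_inv hξ hy), hadd, smul_inv_smul_inv hξ hy]
  exact sub_right_injective hsub

lemma cayley_cayleyInv (hξ : IsUnit (2 * ξ)) (hγ : IsUnit (γ + ξ • 1).det) :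
    cayley ξ (cayleyInv ξ γ) = γ := by
  have hsub := one_sub_cayleyInv hγ
  have hadd : cayley ξ (cayleyInv ξ γ) + ξ • 1 = γ + ξ • 1 := by
    rw [cayley_add_smul_one ξ (hsub ▸ isUnit_det_smul_inv hξ hγ), hsub, smul_inv_smul_inv hξ hγ]
  exact add_right_cancel hadd

end Cayley

section Bijection

variable {n O R : Type*} [Fintype n] [DecidableEq n] [CommRing O] [CommRing R] [Algebra O R]
  {ξ : O}

lemma mapsTo_cayley (hξ : IsUnit (2 * ξ)) :
    Set.MapsTo (cayley (algebraMap O R ξ)) (stronglyIntegral n O R)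
      (xiStronglyIntegral n R ξ) := by
  intro y hy
  rw [mem_stronglyIntegral_iff] at hy
  rw [mem_xiStronglyIntegral_iff, cayley_add_smul_one _ hy.isUnit_det]
  simpa only [map_mul, map_ofNat] using hy.inv.smul hξ

lemma mapsTo_cayleyInv (hξ : IsUnit (2 * ξ)) :
    Set.MapsTo (cayleyInv (algebraMap O R ξ)) (xiStronglyIntegral n R ξ)
      (stronglyIntegral n O R) := by
  intro γ hγ
  rw [mem_xiStronglyIntegral_iff] at hγ
  rw [mem_stronglyIntegral_iff, one_sub_cayleyInv hγ.isUnit_det]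
  simpa only [map_mul, map_ofNat] using hγ.inv.smul hξ

end Bijection

theorem cayley_transform_strongly_integral_bijection_general
    (n O R : Type*) [Fintype n] [DecidableEq n] [CommRing O] [CommRing R] [Algebra O R]
    {ξ : O} (hξ : IsUnit (2 * ξ)) :
    let ξR : R := algebraMap O R ξ
    Set.MapsTo (cayley ξR) (stronglyIntegral n O R) (xiStronglyIntegral n R ξ) ∧
      Set.MapsTo (cayleyInv ξR) (xiStronglyIntegral n R ξ) (stronglyIntegral n O R) ∧
      (∀ y ∈ stronglyIntegral n O R, cayleyInv ξR (cayley ξR y) = y) ∧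
      (∀ γ ∈ xiStronglyIntegral n R ξ, cayley ξR (cayleyInv ξR γ) = γ) ∧
      (∀ y ∈ stronglyIntegral n O R,
        (cayley ξR y + ξR • 1).det * (1 - y).det = (2 * ξR) ^ Fintype.card n) := by
  intro ξR
  have hξR : IsUnit (2 * ξR) := by simpa only [map_mul, map_ofNat] using hξ.map (algebraMap O R)
  refine ⟨mapsTo_cayley hξ, mapsTo_cayleyInv hξ, fun y hy => ?_, fun γ hγ => ?_, fun y hy => ?_⟩
  · exact cayleyInv_cayley hξR (mem_stronglyIntegral_iff.1 hy).isUnit_det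
  · exact cayley_cayleyInv hξR (mem_xiStronglyIntegral_iff.1 hγ).isUnit_det
  · exact det_cayley_add_smul_one_mul_det_one_sub ξR (mem_stronglyIntegral_iff.1 hy).isUnit_det

/-- Over an integrally closed domain `O` with fraction field `F` in which `2` and `ξ` are
units of `O`, the Cayley transform `y ↦ ξ(1+y)(1-y)⁻¹` is a bijection from the strongly
integral matrices onto the ξ-strongly integral matrices, with inverse
`γ ↦ (γ-ξ)(γ+ξ)⁻¹`; moreover `det(c_ξ(y) + ξ)·det(1-y) = (2ξ)ⁿ`. -/
theorem cayley_transform_strongly_integral_bijection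
    (O F : Type*) [CommRing O] [IsDomain O] [IsIntegrallyClosed O]
    [Field F] [Algebra O F] [IsFractionRing O F]
    (h2 : IsUnit (2 : O)) (ξ : Oˣ) (n : ℕ) (hn : 1 ≤ n) :
    let ξF : F := algebraMap O F (ξ : O)
    let Y : Set (Matrix (Fin n) (Fin n) F) :=
      { y | (∀ k, y.charpoly.coeff k ∈ (algebraMap O F).range) ∧
            ∃ u : Oˣ, algebraMap O F (u : O) = (1 - y).det }
    let Γ : Set (Matrix (Fin n) (Fin n) F) :=
      { γ | (∀ k, γ.charpoly.coeff k ∈ (algebraMap O F).range) ∧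
            ∃ u : Oˣ, algebraMap O F (u : O) = (γ + ξF • 1).det }
    let f : Matrix (Fin n) (Fin n) F → Matrix (Fin n) (Fin n) F :=
      fun y => ξF • ((1 + y) * (1 - y)⁻¹)
    let g : Matrix (Fin n) (Fin n) F → Matrix (Fin n) (Fin n) F :=
      fun γ => (γ - ξF • 1) * (γ + ξF • 1)⁻¹
    Set.MapsTo f Y Γ ∧ Set.MapsTo g Γ Y ∧
      (∀ y ∈ Y, g (f y) = y) ∧ (∀ γ ∈ Γ, f (g γ) = γ) ∧
      (∀ y ∈ Y, (f y + ξF • 1).det * (1 - y).det = (2 * ξF) ^ n) := by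
  have h := cayley_transform_strongly_integral_bijection_general (Fin n) O F (h2.mul ξ.isUnit)
  rwa [Fintype.card_fin] at h
end

section
/- Let R be a commutative ring, n ≥ 2, and let y ∈ Mₙ(R) be written in block form y = [[A, b],[c, d]], where A ∈ M_{n−1}(R), b is a column vector of length n−1, c is a row vector of length n−1, and d ∈ R. Let e = (0, …, 0, 1)ᵀ ∈ Rⁿ be the last standard basis vector. Then the determinant of the n×n matrix whose columns are e, y·e, y²·e, …, y^{n−1}·e equals (−1)^{n−1} times the determinant of the (n−1)×(n−1) matrix whose columns are b, A·b, A²·b, …, A^{n−2}·b. -/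
open Matrix

/-!
Let `A` be `y` without its `p`-th row and column, and `b` its `p`-th column without the `p`-th
entry. Deleting the `p`-th coordinate `sⱼ` of `yʲ eₚ` gives vectors `xⱼ` with `x₀ = 0` and
`xⱼ₊₁ = A xⱼ + sⱼ b`. Hence `xⱼ₊₁ = ∑ₗ sⱼ₋ₗ Aˡ b`, so `(x₁ | ⋯ | xₘ)` is the Krylov matrix of
`A` at `b` times an upper triangular Toeplitz matrix with diagonal `s₀ = 1`. Up to sign, its
determinant is that of the Krylov matrix of `y` at `eₚ`, whose first column is `eₚ`.
-/

section Krylov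

variable {R n : Type*} [Fintype n] [DecidableEq n]

/-- The rectangular Krylov matrix `(v | A v | ⋯ | A ^ (k - 1) v)` of `A` at `v`, with the number
`k` of columns independent of the size of `A`. -/
def krylovMatrix [Semiring R] (A : Matrix n n R) (v : n → R) (k : ℕ) : Matrix n (Fin k) R :=
  of fun i j => (A ^ (j : ℕ) *ᵥ v) i

theorem krylovMatrix_col_zero [Semiring R] (A : Matrix n n R) (v : n → R) (k : ℕ) :
    (krylovMatrix A v (k + 1)).col 0 = v := by
  ext i
  simp [krylovMatrix]

/-- The upper triangular Toeplitz matrix whose `d`-th superdiagonal is constantly `s d`; it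
expresses convolution with `s` as a change of columns. -/
def upperToeplitz [Zero R] (s : ℕ → R) (k : ℕ) : Matrix (Fin k) (Fin k) R :=
  of fun i j => if i ≤ j then s (j - i) else 0

theorem det_upperToeplitz [CommRing R] (s : ℕ → R) (k : ℕ) :
    (upperToeplitz s k).det = s 0 ^ k := by
  have upper : (upperToeplitz s k).IsUpperTriangular := fun _ _ hji => if_neg (not_le.2 hji)
  rw [det_of_isUpperTriangular upper]
  simp [upperToeplitz]

theorem krylovMatrix_mul_upperToeplitz_apply [CommSemiring R] (A : Matrix n n R) (v : n → R)
    (s : ℕ → R) {k : ℕ} (i : n) (j : Fin k) :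
    (krylovMatrix A v k * upperToeplitz s k) i j =
      (∑ l ∈ Finset.range (j + 1), s (j - l) • A ^ l *ᵥ v) i := by
  have range_eq : Finset.range (j + 1) = (Finset.range k).filter (· ≤ (j : ℕ)) := by
    ext l
    simp only [Finset.mem_range, Finset.mem_filter]
    lia
  rw [range_eq, Finset.sum_filter, ← Fin.sum_univ_eq_sum_range
    (fun l => if l ≤ (j : ℕ) then s (j - l) • A ^ l *ᵥ v else 0), Finset.sum_apply, mul_apply]
  refine Finset.sum_congr rfl fun l _ => ?_
  by_cases hlj : l ≤ j <;> simp [krylovMatrix, upperToeplitz, hlj, mul_comm]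

theorem eq_sum_of_mulVec_recurrence [CommSemiring R] {A : Matrix n n R} {v : n → R} {s : ℕ → R}
    {x : ℕ → n → R} (x_zero : x 0 = 0) (x_succ : ∀ j, x (j + 1) = A *ᵥ x j + s j • v) (j : ℕ) :
    x (j + 1) = ∑ l ∈ Finset.range (j + 1), s (j - l) • A ^ l *ᵥ v := by
  induction j with
  | zero => simp [x_succ, x_zero]
  | succ j ih =>
    rw [x_succ, ih, Finset.sum_range_succ' _ (j + 1), mulVec_sum]
    simp [mulVec_smul, mulVec_mulVec, pow_succ']

theorem of_mulVec_recurrence_eq_krylovMatrix_mul [CommSemiring R] {A : Matrix n n R} {v : n → R}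
    {s : ℕ → R} {x : ℕ → n → R} (x_zero : x 0 = 0)
    (x_succ : ∀ j, x (j + 1) = A *ᵥ x j + s j • v) (k : ℕ) :
    (of fun i (j : Fin k) => x (j + 1) i) = krylovMatrix A v k * upperToeplitz s k := by
  ext i j
  rw [krylovMatrix_mul_upperToeplitz_apply, of_apply, eq_sum_of_mulVec_recurrence x_zero x_succ]

end Krylov

section Minor

variable {R : Type*} {m : ℕ}

theorem mulVec_comp_eq_submatrix_succAbove_mulVec_add [CommSemiring R] {k l : Type*}
    (M : Matrix k (Fin (m + 1)) R) (v : Fin (m + 1) → R) (r : l → k) (p : Fin (m + 1)) :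
    (M *ᵥ v) ∘ r = M.submatrix r p.succAbove *ᵥ (v ∘ p.succAbove) + v p • M.col p ∘ r := by
  ext i
  simp [mulVec, dotProduct, Fin.sum_univ_succAbove _ p, add_comm, mul_comm]

theorem det_of_col_eq_single [CommRing R] {M : Matrix (Fin (m + 1)) (Fin (m + 1)) R}
    {p q : Fin (m + 1)} {c : R} (h : M.col q = Pi.single p c) :
    M.det = (-1) ^ (p + q : ℕ) * c * (M.submatrix p.succAbove q.succAbove).det := by
  have entry (i : Fin (m + 1)) : M i q = (Pi.single p c : Fin (m + 1) → R) i := congrFun h i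
  rw [det_succ_column M q, Finset.sum_eq_single p] <;> simp +contextual [entry]

theorem krylovMatrix_single_submatrix_succAbove [CommSemiring R]
    (y : Matrix (Fin (m + 1)) (Fin (m + 1)) R) (p : Fin (m + 1)) (c : R) (k : ℕ) :
    (krylovMatrix y (Pi.single p c) (k + 1)).submatrix p.succAbove Fin.succ =
      krylovMatrix (y.submatrix p.succAbove p.succAbove) (y.col p ∘ p.succAbove) k *
        upperToeplitz (fun j => (y ^ j *ᵥ Pi.single p c) p) k := by
  rw [← of_mulVec_recurrence_eq_krylovMatrix_mul
    (x := fun j => (y ^ j *ᵥ Pi.single p c) ∘ p.succAbove)]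
  · rfl
  · ext i
    simp
  · intro j
    rw [pow_succ', ← mulVec_mulVec, mulVec_comp_eq_submatrix_succAbove_mulVec_add _ _ _ p]

end Minor

theorem krylov_det_block_general {R : Type*} [CommRing R] {m : ℕ}
    (y : Matrix (Fin (m + 1)) (Fin (m + 1)) R) (p : Fin (m + 1)) :
    (krylovMatrix y (Pi.single p 1) (m + 1)).det = (-1) ^ (p : ℕ) *
      (krylovMatrix (y.submatrix p.succAbove p.succAbove) (y.col p ∘ p.succAbove) m).det := by
  rw [det_of_col_eq_single (krylovMatrix_col_zero y (Pi.single p 1) m), Fin.succAbove_zero,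
    krylovMatrix_single_submatrix_succAbove, det_mul, det_upperToeplitz]
  simp

/-- For a square matrix `y` of size `n = m+1` in block form `[[A, b],[c, d]]` (with `A` of
size `m × m`) and `e` the last standard basis vector, the determinant of the Krylov matrix
`(e | y e | y² e | ⋯ | y^{n-1} e)` equals `(-1)^{n-1}` times the determinant of the Krylov
matrix `(b | A b | A² b | ⋯ | A^{n-2} b)`. -/
theorem krylov_det_block
    (R : Type*) [CommRing R] (m : ℕ) (hm : 1 ≤ m)
    (y : Matrix (Fin (m + 1)) (Fin (m + 1)) R) :
    let A : Matrix (Fin m) (Fin m) R :=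
      Matrix.of fun i j => y (Fin.castSucc i) (Fin.castSucc j)
    let b : Fin m → R := fun i => y (Fin.castSucc i) (Fin.last m)
    let e : Fin (m + 1) → R := Pi.single (Fin.last m) 1
    Matrix.det (Matrix.of fun i j : Fin (m + 1) => (y ^ (j : ℕ)).mulVec e i)
      = (-1) ^ m * Matrix.det (Matrix.of fun i j : Fin m => (A ^ (j : ℕ)).mulVec b i) := by
  have general := krylov_det_block_general y (Fin.last m)
  rwa [Fin.succAbove_last] at general
end

section
/- Let O be a commutative ring, σ : O → O a ring automorphism with σ ∘ σ = id, and ϖ ∈ O a regular element (nonzerodivisor) with σ(ϖ) = ϖ. Let n ≥ 2 and let K ∈ M_{n−1}(O) be a matrix with ᵗK̄ = K (σ-hermitian) and det K a unit of O. Set J := the block diagonal matrix with blocks K and ϖ, and J̃ := the block diagonal matrix with blocks K and 1 (both n×n, block sizes (n−1) + 1). Then the map μ sending a block matrix x = [[A, b],[c, d]] (with A of size (n−1)×(n−1), b a column, c a row, d a scalar) to μ(x) := [[A, ϖ·b],[c, d]] is a bijection from { x ∈ Mₙ(O) : ᵗx̄·J̃ + J̃·x = 0 } onto { x ∈ Mₙ(O)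 : ᵗx̄·J + J·x = 0 }. (Equivalently: for every integral element of the unitary Lie algebra of J, the b-block is automatically divisible by ϖ, and dividing it by ϖ yields an integral element of the unitary Lie algebra of J̃.) -/
open Matrix

/-!
Write `x = [[A, b], [c, d]]` and `x̄` for the entrywise application of `σ`. Membership in the
unitary Lie algebra of `diag(K, ϖ L)` amounts to four block equations,

* `ᵗĀ K + K A = 0`,
* `ϖ ᵗc̄ L + K b = 0`,
* `ᵗb̄ K + ϖ L c = 0`,
* `ϖ (ᵗd̄ L + L d) = 0`.

When `b` is replaced by `ϖ b`, the last three are `ϖ` times the equations for `diag(K, L)`, and the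
regular element `ϖ` can be cancelled. The second one shows that `b = -ϖ K⁻¹ ᵗc̄ L` is always
divisible by `ϖ`.
-/

section

variable {R m n : Type*}

theorem smul_eq_zero_iff_of_isSMulRegular {M : Type*} [Zero M] [SMulZeroClass R M] {r : R}
    (hr : IsSMulRegular M r) {x : M} : r • x = 0 ↔ x = 0 :=
  ⟨hr.right_eq_zero_of_smul, smul_eq_zero_of_right r⟩

/-- The map `[[A, b], [c, d]] ↦ [[A, ϖ b], [c, d]]` on block matrices, denoted `μ` in the theorem;
it is the inverse of the paper's `θ`. -/
def scaleUpperRight [Mul R] (ϖ : R) (x : Matrix (m ⊕ n) (m ⊕ n) R) : Matrix (m ⊕ n) (m ⊕ n) R :=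
  fromBlocks x.toBlocks₁₁ (ϖ • x.toBlocks₁₂) x.toBlocks₂₁ x.toBlocks₂₂

theorem scaleUpperRight_injective [Mul R] {ϖ : R} (hreg : IsLeftRegular ϖ) :
    Function.Injective (scaleUpperRight ϖ : Matrix (m ⊕ n) (m ⊕ n) R → _) := by
  intro x y hxy
  obtain ⟨h₁₁, h₁₂, h₂₁, h₂₂⟩ := fromBlocks_inj.1 hxy
  exact ext_iff_blocks.2 ⟨h₁₁, hreg.matrix h₁₂, h₂₁, h₂₂⟩

theorem mem_range_scaleUpperRight_iff [Mul R] {ϖ : R} {x : Matrix (m ⊕ n) (m ⊕ n) R} :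
    x ∈ Set.range (scaleUpperRight ϖ) ↔ ∃ b, x.toBlocks₁₂ = ϖ • b := by
  constructor
  · rintro ⟨y, rfl⟩
    exact ⟨y.toBlocks₁₂, rfl⟩
  · rintro ⟨b, hb⟩
    exact ⟨fromBlocks x.toBlocks₁₁ b x.toBlocks₂₁ x.toBlocks₂₂,
      ext_iff_blocks.2 ⟨rfl, hb.symm, rfl, rfl⟩⟩

variable [CommRing R] [Fintype m] [Fintype n]

/-- The unitary Lie algebra of `J`, as a bare set of matrices, for an arbitrary ring endomorphism
`σ` in place of the involution and an arbitrary square matrix `J`. -/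
def unitaryLieAlgebra (σ : R →+* R) (J : Matrix n n R) : Set (Matrix n n R) :=
  {x | (x.map σ)ᵀ * J + J * x = 0}

variable {σ : R →+* R} {ϖ : R} {K : Matrix m m R} {L : Matrix n n R}

theorem mem_unitaryLieAlgebra_fromBlocks_iff {x : Matrix (m ⊕ n) (m ⊕ n) R} :
    x ∈ unitaryLieAlgebra σ (fromBlocks K 0 0 L) ↔
      (x.toBlocks₁₁.map σ)ᵀ * K + K * x.toBlocks₁₁ = 0 ∧
      (x.toBlocks₂₁.map σ)ᵀ * L + K * x.toBlocks₁₂ = 0 ∧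
      (x.toBlocks₁₂.map σ)ᵀ * K + L * x.toBlocks₂₁ = 0 ∧
      (x.toBlocks₂₂.map σ)ᵀ * L + L * x.toBlocks₂₂ = 0 := by
  rw [unitaryLieAlgebra, Set.mem_ofPred_eq, ← fromBlocks_toBlocks x, fromBlocks_map,
    fromBlocks_transpose, fromBlocks_multiply, fromBlocks_multiply, fromBlocks_add,
    ← fromBlocks_zero, fromBlocks_inj]
  simp

theorem scaleUpperRight_mem_unitaryLieAlgebra_iff (hreg : IsLeftRegular ϖ) (hϖ : σ ϖ = ϖ)
    {x : Matrix (m ⊕ n) (m ⊕ n) R} :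
    scaleUpperRight ϖ x ∈ unitaryLieAlgebra σ (fromBlocks K 0 0 (ϖ • L)) ↔
      x ∈ unitaryLieAlgebra σ (fromBlocks K 0 0 L) := by
  have map_smul_σ (b : Matrix m n R) : (ϖ • b).map σ = ϖ • b.map σ :=
    Matrix.map_smul σ ϖ (fun a ↦ by simp [hϖ]) b
  simp only [mem_unitaryLieAlgebra_fromBlocks_iff, scaleUpperRight, toBlocks_fromBlocks₁₁,
    toBlocks_fromBlocks₁₂, toBlocks_fromBlocks₂₁, toBlocks_fromBlocks₂₂, map_smul_σ,
    transpose_smul, Matrix.mul_smul, Matrix.smul_mul, ← smul_add,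
    smul_eq_zero_iff_of_isSMulRegular hreg.matrix]

theorem exists_toBlocks₁₂_eq_smul_of_mem_unitaryLieAlgebra [DecidableEq m] (hK : IsUnit K.det)
    {x : Matrix (m ⊕ n) (m ⊕ n) R}
    (hx : x ∈ unitaryLieAlgebra σ (fromBlocks K 0 0 (ϖ • L))) :
    ∃ b, x.toBlocks₁₂ = ϖ • b := by
  obtain ⟨-, h₁₂, -, -⟩ := mem_unitaryLieAlgebra_fromBlocks_iff.1 hx
  refine ⟨-(K⁻¹ * ((x.toBlocks₂₁.map σ)ᵀ * L)), ?_⟩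
  calc x.toBlocks₁₂ = K⁻¹ * (K * x.toBlocks₁₂) := (nonsing_inv_mul_cancel_left K _ hK).symm
    _ = K⁻¹ * -((x.toBlocks₂₁.map σ)ᵀ * ϖ • L) := by rw [eq_neg_of_add_eq_zero_right h₁₂]
    _ = ϖ • -(K⁻¹ * ((x.toBlocks₂₁.map σ)ᵀ * L)) := by
      rw [Matrix.mul_neg, Matrix.mul_smul, Matrix.mul_smul, smul_neg]

theorem theta_bijOn_unitary_lie_algebra_general [DecidableEq m] (hreg : ϖ ∈ nonZeroDivisors R)
    (hϖ : σ ϖ = ϖ) (hK : IsUnit K.det) :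
    Set.BijOn (scaleUpperRight ϖ) (unitaryLieAlgebra σ (fromBlocks K 0 0 L))
      (unitaryLieAlgebra σ (fromBlocks K 0 0 (ϖ • L))) := by
  have ϖ_regular : IsLeftRegular ϖ := (isRegular_iff_mem_nonZeroDivisors.2 hreg).left
  refine ⟨fun x hx ↦ (scaleUpperRight_mem_unitaryLieAlgebra_iff ϖ_regular hϖ).2 hx,
    (scaleUpperRight_injective ϖ_regular).injOn, fun y hy ↦ ?_⟩
  obtain ⟨x, rfl⟩ := mem_range_scaleUpperRight_iff.2
    (exists_toBlocks₁₂_eq_smul_of_mem_unitaryLieAlgebra hK hy)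
  exact ⟨x, (scaleUpperRight_mem_unitaryLieAlgebra_iff ϖ_regular hϖ).1 hy, rfl⟩

end

/-- For a σ-hermitian matrix `K` of size `n-1` with unit determinant, and `ϖ` a σ-fixed
nonzerodivisor, the map `μ : [[A,b],[c,d]] ↦ [[A, ϖb],[c,d]]` is a bijection from the
integral unitary Lie algebra of `J̃ = diag(K, 1)` onto that of `J = diag(K, ϖ)`. -/
theorem theta_bijOn_unitary_lie_algebra
    (O : Type*) [CommRing O] (σ : O ≃+* O) (hσ : ∀ x, σ (σ x) = x)
    (ϖ : O) (hreg : ϖ ∈ nonZeroDivisors O) (hϖ : σ ϖ = ϖ)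
    (m : ℕ) (hm : 1 ≤ m)
    (K : Matrix (Fin m) (Fin m) O) (hK : (K.map σ)ᵀ = K) (hKdet : IsUnit K.det) :
    let J : Matrix (Fin m ⊕ Unit) (Fin m ⊕ Unit) O :=
      Matrix.fromBlocks K 0 0 (ϖ • 1)
    let Jt : Matrix (Fin m ⊕ Unit) (Fin m ⊕ Unit) O :=
      Matrix.fromBlocks K 0 0 1
    let μ : Matrix (Fin m ⊕ Unit) (Fin m ⊕ Unit) O →
        Matrix (Fin m ⊕ Unit) (Fin m ⊕ Unit) O :=
      fun x => Matrix.fromBlocks x.toBlocks₁₁ (ϖ • x.toBlocks₁₂) x.toBlocks₂₁ x.toBlocks₂₂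
    Set.BijOn μ
      { x | (x.map σ)ᵀ * Jt + Jt * x = 0 }
      { x | (x.map σ)ᵀ * J + J * x = 0 } := by
  exact theta_bijOn_unitary_lie_algebra_general (σ := (σ : O →+* O)) hreg hϖ hKdet
end

section
/- Let F be a field equipped with a ring involution σ (a field automorphism with σ ∘ σ = id); write x̄ := σ(x) and N x := x·x̄ for x ∈ F. (i) For every a ∈ F and every b ∈ Fˣ, the matrix γ(a, b) := [[a, b],[(1 − N a)/b̄, −ā·b/b̄]] satisfies γ(a,b)·γ(a,b)‾ = 1₂ (where the bar on a matrix is entrywise σ) and det γ(a, b) = −b/b̄. (ii) Conversely, if γ ∈ M₂(F) satisfies γ·γ̄ = 1₂ and its (1,2)-entry b := γ₁₂ is nonzero, then γ₂₁ = (1 − N a)/b̄ and γ₂₂ = −ā·b/b̄ where a := γ₁₁; that is, γ = γ(a, b). -/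
open Matrix

/-!
Square matrices over a commutative ring commute with their one-sided inverses, so `γ γ̄ = 1` gives
`γ̄ γ = 1`. The first row of the latter, `ā a + b̄ c = 1` and `ā b + b̄ d = 0`, is a linear system
for the second row `(c, d)` of `γ`, and it determines that row once `b̄` is invertible.
In the other direction, conjugation sends `γ(a, b)` to `γ(ā, b̄)`, and the product of the two is
computed directly.
-/

section CommRing

variable {R : Type*} [CommRing R] {f : R → R} {γ : Matrix (Fin 2) (Fin 2) R}

theorem lower_left_mul_apply_of_mul_map_eq_one (hγ : γ * γ.map f = 1) :
    γ 1 0 * f (γ 0 1) = 1 - γ 0 0 * f (γ 0 0) := by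
  have map_mul_self : γ.map f * γ = 1 := mul_eq_one_comm.mp hγ
  have first_row : f (γ 0 0) * γ 0 0 + f (γ 0 1) * γ 1 0 = 1 := by
    simpa [mul_apply] using congrFun₂ map_mul_self 0 0
  linear_combination first_row

theorem lower_right_mul_apply_of_mul_map_eq_one (hγ : γ * γ.map f = 1) :
    γ 1 1 * f (γ 0 1) = -(f (γ 0 0)) * γ 0 1 := by
  have map_mul_self : γ.map f * γ = 1 := mul_eq_one_comm.mp hγ
  have first_row : f (γ 0 0) * γ 0 1 + f (γ 0 1) * γ 1 1 = 0 := by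
    simpa [mul_apply] using congrFun₂ map_mul_self 0 1
  linear_combination first_row

end CommRing

section Field

variable {F : Type*} [Field F] {E : Type*} [FunLike E F F] [RingHomClass E F F]

/-- The matrix `γ(a, b)` parametrizing the part of the symmetric space `γ γ̄ = 1` where the
upper-right entry `b` is nonzero. The conjugation `f` is an arbitrary function here; the second row
has its intended meaning only when `f b ≠ 0`. -/
def symmetricSpaceMatrix (f : F → F) (a b : F) : Matrix (Fin 2) (Fin 2) F :=
  !![a, b; (1 - a * f a) / f b, -(f a) * b / f b]

theorem det_symmetricSpaceMatrix (f : F → F) (a b : F) :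
    (symmetricSpaceMatrix f a b).det = -b / f b := by
  rw [symmetricSpaceMatrix, det_fin_two_of]
  ring

theorem map_symmetricSpaceMatrix (σ : E) (a b : F) :
    (symmetricSpaceMatrix σ a b).map σ = symmetricSpaceMatrix σ (σ a) (σ b) := by
  ext i j
  fin_cases i <;> fin_cases j <;> simp [symmetricSpaceMatrix]

theorem symmetricSpaceMatrix_mul_map {σ : E} (hσ : Function.Involutive σ) (a : F) {b : F}
    (hb : b ≠ 0) :
    symmetricSpaceMatrix σ a b * (symmetricSpaceMatrix σ a b).map σ = 1 := by
  have hσb : σ b ≠ 0 := (map_ne_zero σ).mpr hb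
  rw [map_symmetricSpaceMatrix]
  simp only [symmetricSpaceMatrix, hσ a, hσ b, mul_fin_two, one_fin_two]
  congr! <;> field_simp <;> ring

theorem eq_symmetricSpaceMatrix_of_mul_map_eq_one {f : F → F} {γ : Matrix (Fin 2) (Fin 2) F}
    (hγ : γ * γ.map f = 1) (hb : f (γ 0 1) ≠ 0) :
    γ = symmetricSpaceMatrix f (γ 0 0) (γ 0 1) := by
  have lower_left : γ 1 0 = (1 - γ 0 0 * f (γ 0 0)) / f (γ 0 1) :=
    eq_div_of_mul_eq hb (lower_left_mul_apply_of_mul_map_eq_one hγ)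
  have lower_right : γ 1 1 = -(f (γ 0 0)) * γ 0 1 / f (γ 0 1) :=
    eq_div_of_mul_eq hb (lower_right_mul_apply_of_mul_map_eq_one hγ)
  rw [symmetricSpaceMatrix, ← lower_left, ← lower_right]
  exact eta_fin_two γ

end Field

/-- Parametrization of the rank-2 symmetric space: (i) for `b ≠ 0` the matrix
`γ(a,b) = [[a, b],[(1 - Na)/b̄, -ā b/b̄]]` satisfies `γ γ̄ = 1` and `det γ(a,b) = -b/b̄`;
(ii) conversely any `γ` with `γ γ̄ = 1` and nonzero `(1,2)`-entry is of this form. -/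
theorem symmetric_space_two_parametrization
    (F : Type*) [Field F] (σ : F ≃+* F) (hσ : ∀ x, σ (σ x) = x) :
    (∀ a b : F, b ≠ 0 →
      let γ : Matrix (Fin 2) (Fin 2) F :=
        !![a, b; (1 - a * σ a) / σ b, -(σ a) * b / σ b]
      γ * γ.map σ = 1 ∧ γ.det = -b / σ b) ∧
    (∀ γ : Matrix (Fin 2) (Fin 2) F, γ * γ.map σ = 1 → γ 0 1 ≠ 0 →
      γ 1 0 = (1 - γ 0 0 * σ (γ 0 0)) / σ (γ 0 1) ∧
      γ 1 1 = -(σ (γ 0 0)) * γ 0 1 / σ (γ 0 1)) := by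
  refine ⟨fun a b hb ↦ ⟨symmetricSpaceMatrix_mul_map hσ a hb,
    det_symmetricSpaceMatrix σ a b⟩, fun γ hγ hb ↦ ?_⟩
  have γ_eq : γ = symmetricSpaceMatrix σ (γ 0 0) (γ 0 1) :=
    eq_symmetricSpaceMatrix_of_mul_map_eq_one hγ ((map_ne_zero σ).mpr hb)
  exact ⟨congrFun₂ γ_eq 1 0, congrFun₂ γ_eq 1 1⟩
end

section
/- Let F be a field equipped with a ring involution σ; write x̄ := σ(x) and N x := x·x̄. Let ε ∈ Fˣ with ε̄ = ε, let a ∈ F with N a ≠ 1, and let δ ∈ F with N δ = 1. Then the following are equivalent: (i) there exists g ∈ M₂(F) such that ᵗḡ·diag(1, −ε)·g = diag(1, −ε), g₁₁ = a, det g = δ, and g₁₂·g₂₁ ≠ 0; (ii) there exists c ∈ Fˣ with ε·N c = N a − 1. (Explicitly, when (ii) holds witnesses are g = [[a, ε·c̄·δ],[c, δ·ā]] if a ≠ 0, and g = [[0, −δ/c],[c, 0]] if a = 0.) -/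
open Matrix

/-!
The `(0, 0)` entry of `gᴴ * diag(1, -ε) * g = diag(1, -ε)` says that the first column `(a, c)` of
`g` has length `N a - ε N c = 1`. Conversely, `(ε c̄, ā)` is orthogonal to `(a, c)` and has length
`-ε (N a - ε N c)`, so a first column of length `1` together with `δ` times this vector is a
unitary matrix, of determinant `δ (N a - ε N c) = δ`.
-/

section StarRing

variable {R : Type*} [CommRing R] [StarRing R]

theorem conjTranspose_mul_diag_one_neg_mul_apply (ε : R) (g : Matrix (Fin 2) (Fin 2) R)
    (i j : Fin 2) :
    (gᴴ * !![1, 0; 0, -ε] * g) i j =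
      star (g 0 i) * g 0 j - ε * (star (g 1 i) * g 1 j) := by
  simp only [Matrix.mul_apply, conjTranspose_apply, Fin.sum_univ_two, of_apply, cons_val',
    cons_val_zero, cons_val_one, cons_val_fin_one]
  ring

theorem mul_norm_eq_norm_sub_one_of_preserves_form {ε : R} {g : Matrix (Fin 2) (Fin 2) R}
    (hg : gᴴ * !![1, 0; 0, -ε] * g = !![1, 0; 0, -ε]) :
    ε * (g 1 0 * star (g 1 0)) = g 0 0 * star (g 0 0) - 1 := by
  have column_length : star (g 0 0) * g 0 0 - ε * (star (g 1 0) * g 1 0) = 1 := by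
    rw [← conjTranspose_mul_diag_one_neg_mul_apply, hg]
    simp
  linear_combination -column_length

/-- The matrix with first column `(a, c)` whose second column is `δ` times the vector `(ε c̄, ā)`
orthogonal to it for the hermitian form `diag(1, -ε)`. When `(a, c)` has length `1` and `δ` is
unitary, it is an element of the unitary group of that form with determinant `δ`. -/
def orthogonalCompletion (ε δ a c : R) : Matrix (Fin 2) (Fin 2) R :=
  !![a, ε * star c * δ; c, δ * star a]

theorem det_orthogonalCompletion (ε δ a c : R) :
    (orthogonalCompletion ε δ a c).det = (a * star a - ε * (c * star c)) * δ := by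
  rw [orthogonalCompletion, det_fin_two_of]
  ring

theorem conjTranspose_mul_diag_mul_orthogonalCompletion {ε : R} (hε : IsSelfAdjoint ε)
    (δ a c : R) :
    (orthogonalCompletion ε δ a c)ᴴ * !![1, 0; 0, -ε] * orthogonalCompletion ε δ a c =
      (a * star a - ε * (c * star c)) • !![1, 0; 0, -ε * (δ * star δ)] := by
  ext i j
  rw [conjTranspose_mul_diag_one_neg_mul_apply]
  fin_cases i <;> fin_cases j <;>
    simp only [orthogonalCompletion, Matrix.smul_apply, smul_eq_mul, of_apply, cons_val',
      cons_val_zero, cons_val_one, cons_val_fin_one, Fin.zero_eta, Fin.mk_one, star_mul',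
      star_star, hε.star_eq] <;>
    ring

theorem orthogonalCompletion_preserves_form {ε δ a c : R} (hε : IsSelfAdjoint ε)
    (hδ : δ ∈ unitary R) (hac : a * star a - ε * (c * star c) = 1) :
    (orthogonalCompletion ε δ a c)ᴴ * !![1, 0; 0, -ε] * orthogonalCompletion ε δ a c =
      !![1, 0; 0, -ε] := by
  rw [conjTranspose_mul_diag_mul_orthogonalCompletion hε, hac,
    Unitary.mul_star_self_of_mem hδ, one_smul, mul_one]

theorem orthogonalCompletion_offDiag_ne_zero [NoZeroDivisors R] {ε δ c : R} (hε : ε ≠ 0)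
    (hδ : δ ∈ unitary R) (hc : c ≠ 0) (a : R) :
    orthogonalCompletion ε δ a c 0 1 * orthogonalCompletion ε δ a c 1 0 ≠ 0 := by
  have hδ_unit : IsUnit δ := .of_mul_eq_one _ (Unitary.mul_star_self_of_mem hδ)
  have upper_right_ne_zero : ε * star c * δ ≠ 0 :=
    mt hδ_unit.mul_left_eq_zero.mp (mul_ne_zero hε (star_ne_zero.mpr hc))
  exact mul_ne_zero upper_right_ne_zero hc

theorem matching_criterion_unitary_group_n2_general [NoZeroDivisors R] {ε δ : R}
    (hε : ε ≠ 0) (hεfix : IsSelfAdjoint ε) (hδ : δ ∈ unitary R) (a : R) :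
    (∃ g : Matrix (Fin 2) (Fin 2) R,
        gᴴ * !![1, 0; 0, -ε] * g = !![1, 0; 0, -ε] ∧
        g 0 0 = a ∧ g.det = δ ∧ g 0 1 * g 1 0 ≠ 0) ↔
    (∃ c : R, c ≠ 0 ∧ ε * (c * star c) = a * star a - 1) := by
  constructor
  · rintro ⟨g, hg, rfl, -, hoff⟩
    exact ⟨g 1 0, right_ne_zero_of_mul hoff, mul_norm_eq_norm_sub_one_of_preserves_form hg⟩
  · rintro ⟨c, hc, hac⟩
    have column_length : a * star a - ε * (c * star c) = 1 := by rw [hac, sub_sub_cancel]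
    refine ⟨orthogonalCompletion ε δ a c,
      orthogonalCompletion_preserves_form hεfix hδ column_length, rfl, ?_,
      orthogonalCompletion_offDiag_ne_zero hε hδ hc a⟩
    rw [det_orthogonalCompletion, column_length, one_mul]

end StarRing

/-- The star ring structure on a commutative ring whose star operation is a given involutive
automorphism; it makes `gᴴ` the matrix `(g.map σ)ᵀ`. -/
abbrev starRingOfInvolutive {A : Type*} [CommRing A] (σ : A ≃+* A)
    (hσ : Function.Involutive σ) : StarRing A where
  star := σ
  star_involutive := hσ
  star_mul x y := by rw [map_mul, mul_comm]
  star_add := map_add σ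

/-- Matching criterion for the unitary group of the hermitian form `diag(1, -ε)` in rank 2:
there exists a unitary `g` with prescribed upper-left entry `a`, determinant `δ`, and
nonzero off-diagonal entries, if and only if `Na - 1` lies in `ε·N(Fˣ)`. -/
theorem matching_criterion_unitary_group_n2
    (F : Type*) [Field F] (σ : F ≃+* F) (hσ : ∀ x, σ (σ x) = x)
    (ε : F) (hε : ε ≠ 0) (hεfix : σ ε = ε)
    (a : F) (ha : a * σ a ≠ 1)
    (δ : F) (hδ : δ * σ δ = 1) :
    (∃ g : Matrix (Fin 2) (Fin 2) F,
        (g.map σ)ᵀ * !![1, 0; 0, -ε] * g = !![1, 0; 0, -ε] ∧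
        g 0 0 = a ∧ g.det = δ ∧ g 0 1 * g 1 0 ≠ 0) ↔
    (∃ c : F, c ≠ 0 ∧ ε * (c * σ c) = a * σ a - 1) := by
  let := starRingOfInvolutive σ hσ
  exact matching_criterion_unitary_group_n2_general hε hεfix
    (Unitary.mem_iff_self_mul_star.mpr hδ) a
end

section
/- Let F be a field equipped with a ring involution σ; write x̄ := σ(x) and N x := x·x̄. Let ε ∈ Fˣ with ε̄ = ε, let a, d ∈ F with ā = −a and d̄ = −d, and let β ∈ Fˣ with β̄ = β. Then the following are equivalent: (i) there exists x ∈ M₂(F) such that ᵗx̄·diag(1, −ε) + diag(1, −ε)·x = 0, x₁₁ = a, x₂₂ = d, and x₁₂·x₂₁ = β; (ii) there exists c ∈ Fˣ with β = ε·N c. (Explicitly, any such x has x₁₂ = ε·x̄₂₁, and a witness in (i) is x = [[a, ε·c̄],[c, d]].) -/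
open Matrix

section UnitaryLie

variable {n R : Type*} [Fintype n]

/-- The unitary Lie algebra `𝔲(J)` of a hermitian form with Gram matrix `J`, where `σ` plays the
role of conjugation. Only the underlying set of matrices is recorded. -/
def unitaryLie [NonUnitalNonAssocSemiring R] (σ : R → R) (J : Matrix n n R) : Set (Matrix n n R) :=
  {x | (x.map σ)ᵀ * J + J * x = 0}

theorem mem_unitaryLie_diagonal_iff [NonUnitalNonAssocSemiring R] [DecidableEq n] {σ : R → R}
    {w : n → R} {x : Matrix n n R} :
    x ∈ unitaryLie σ (diagonal w) ↔ ∀ i j, σ (x j i) * w j + w i * x i j = 0 := by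
  simp [unitaryLie, ← Matrix.ext_iff, mul_diagonal, diagonal_mul]

variable [CommRing R] {σ : R ≃+* R} {ε a d : R}

theorem mem_unitaryLie_one_neg_iff (hσ : Function.Involutive σ) (hε : σ ε = ε)
    {x : Matrix (Fin 2) (Fin 2) R} :
    x ∈ unitaryLie σ !![1, 0; 0, -ε] ↔
      σ (x 0 0) = -x 0 0 ∧ x 0 1 = ε * σ (x 1 0) ∧ ε * σ (x 1 1) = -(ε * x 1 1) := by
  -- The `(1, 0)` entry of the defining equation is the conjugate of the `(0, 1)` entry.
  have map_entry_zero_one (h : x 0 1 = ε * σ (x 1 0)) : σ (x 0 1) = ε * x 1 0 := by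
    rw [h, map_mul, hε, hσ]
  simp only [← diagonal_vec2, mem_unitaryLie_diagonal_iff, Fin.forall_fin_two, cons_val_zero,
    cons_val_one]
  grind

theorem mem_unitaryLie_one_neg_and_diag_eq_iff (hσ : Function.Involutive σ) (hε : σ ε = ε)
    (ha : σ a = -a) (hd : σ d = -d) {x : Matrix (Fin 2) (Fin 2) R} :
    (x ∈ unitaryLie σ !![1, 0; 0, -ε] ∧ x 0 0 = a ∧ x 1 1 = d) ↔
      ∃ c, x = !![a, ε * σ c; c, d] := by
  rw [mem_unitaryLie_one_neg_iff hσ hε]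
  constructor
  · rintro ⟨⟨-, h01, -⟩, rfl, rfl⟩
    exact ⟨x 1 0, h01 ▸ eta_fin_two x⟩
  · rintro ⟨c, rfl⟩
    simp [ha, hd]

theorem matching_criterion_unitary_lie_n2_general (hσ : Function.Involutive σ) (hε : σ ε = ε)
    (ha : σ a = -a) (hd : σ d = -d) (β : R) :
    (∃ x : Matrix (Fin 2) (Fin 2) R, x ∈ unitaryLie σ !![1, 0; 0, -ε] ∧
        x 0 0 = a ∧ x 1 1 = d ∧ x 0 1 * x 1 0 = β) ↔
      ∃ c, β = ε * (c * σ c) := by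
  have offDiag_mul (c : R) :
      !![a, ε * σ c; c, d] 0 1 * !![a, ε * σ c; c, d] 1 0 = ε * (c * σ c) := by
    simp [mul_assoc, mul_comm c]
  constructor
  · rintro ⟨x, hx, hxa, hxd, rfl⟩
    obtain ⟨c, rfl⟩ :=
      (mem_unitaryLie_one_neg_and_diag_eq_iff hσ hε ha hd).mp ⟨hx, hxa, hxd⟩
    exact ⟨c, offDiag_mul c⟩
  · rintro ⟨c, rfl⟩
    obtain ⟨hx, hxa, hxd⟩ :=
      (mem_unitaryLie_one_neg_and_diag_eq_iff hσ hε ha hd).mpr ⟨c, rfl⟩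
    exact ⟨_, hx, hxa, hxd, offDiag_mul c⟩

end UnitaryLie

/-- Lie-algebra matching criterion in rank 2 for the unitary Lie algebra of
`diag(1, -ε)`: there exists `x` in this Lie algebra with prescribed diagonal `(a, d)` and
product of off-diagonal entries equal to `β`, iff `β` lies in `ε·N(Fˣ)`. -/
theorem matching_criterion_unitary_lie_n2
    (F : Type*) [Field F] (σ : F ≃+* F) (hσ : ∀ x, σ (σ x) = x)
    (ε : F) (hε : ε ≠ 0) (hεfix : σ ε = ε)
    (a d : F) (ha : σ a = -a) (hd : σ d = -d)
    (β : F) (hβ0 : β ≠ 0) (hβfix : σ β = β) :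
    (∃ x : Matrix (Fin 2) (Fin 2) F,
        (x.map σ)ᵀ * !![1, 0; 0, -ε] + !![1, 0; 0, -ε] * x = 0 ∧
        x 0 0 = a ∧ x 1 1 = d ∧ x 0 1 * x 1 0 = β) ↔
    (∃ c : F, c ≠ 0 ∧ β = ε * (c * σ c)) := by
  exact (matching_criterion_unitary_lie_n2_general hσ hεfix ha hd β).trans <| exists_congr fun c ↦
    (and_iff_right_of_imp fun hβ hc ↦ hβ0 (by simp [hβ, hc])).symm
end

section
/- Let A be a commutative local ring in which 2 is invertible, and let ϖ ∈ A be a nonzerodivisor lying in the maximal ideal of A such that A is ϖ-adically complete and separated. Let B := A[X]/(X² − ϖ), write π for the image of X in B (so B = A ⊕ A·π is free of rank 2 over A and π² = ϖ), and let σ be the A-algebra involution of B with σ(π) = −π; for a matrix M over B let M̄ denote the entrywise application of σ. Let n = 2m be an even positive integer and let G ∈ Mₙ(B) satisfy ᵗḠ = G (σ-hermitian) and G = π·G₀ for some invertible matrix G₀ ∈ GLₙ(B) (π-modularity). Then there exists P ∈ GLₙ(B) such that ᵗP·G·P̄ equals the block diagonal matrix with m diagonal 2×2 blocks [[0, π],[−π,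 0]]. Equivalently, every π-modular σ-hermitian lattice of even rank over B admits a hyperbolic basis; in particular, the unitary group acts transitively on the π-modular lattices in a given hermitian space. -/
open Matrix

/-- The ramified quadratic extension `B = A[X]/(X² - ϖ)` of `A`. -/
noncomputable def ramPoly {A : Type*} [CommRing A] (ϖ : A) : Polynomial A :=
  Polynomial.X ^ 2 - Polynomial.C ϖ

/-!
Write `G = π • K` with `K` invertible. Replacing `K` by its skew part `(K - Kᴴ) / 2` changes it by
a matrix killed by `π`, whose entries are therefore nonunits; so `K` may be taken skew-hermitian.
The skew elements of `B` are the multiples `π * a` with `a` in `A`, hence nonunits, so `K` reduces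
to a nondegenerate alternating form over the residue field. It follows that some `2 × 2` principal
block of `K` has a unit off the diagonal, and this block splits off by a Schur complement. Finally,
the plane `!![a, 1; -1, b]` with `a`, `b` skew contains an isotropic vector `(1, t)`: this is a
quadratic equation for `t` with discriminant `4 * (1 + a * b)`, and `1 + a * b` lies in `1 + ϖ A`,
so it is a square by Hensel's lemma.
-/

/-- Equivalence of sesquilinear forms given by Gram matrices over a ring with involution: `K'` is
obtained from `K` by an invertible base change `Q`. The two index types may differ, so invertibility
of `Q` is expressed by a two-sided inverse `R`. -/
def StarCongruent {B ι κ : Type*} [Semiring B] [StarRing B] [Fintype ι] [Fintype κ]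
    [DecidableEq ι] [DecidableEq κ] (K : Matrix ι ι B) (K' : Matrix κ κ B) : Prop :=
  ∃ (Q : Matrix ι κ B) (R : Matrix κ ι B), Q * R = 1 ∧ R * Q = 1 ∧ Qᴴ * K * Q = K'

namespace StarCongruent

variable {B ι κ μ ν : Type*} [Fintype ι] [Fintype κ] [Fintype μ] [Fintype ν]
  [DecidableEq ι] [DecidableEq κ] [DecidableEq μ] [DecidableEq ν]

section Semiring

variable [Semiring B] [StarRing B]

theorem refl (K : Matrix ι ι B) : StarCongruent K K :=
  ⟨1, 1, by simp, by simp, by simp⟩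

theorem symm {K : Matrix ι ι B} {K' : Matrix κ κ B} (h : StarCongruent K K') :
    StarCongruent K' K := by
  obtain ⟨Q, R, hQR, hRQ, rfl⟩ := h
  refine ⟨R, Q, hRQ, hQR, ?_⟩
  calc Rᴴ * (Qᴴ * K * Q) * R = (Q * R)ᴴ * K * (Q * R) := by
        simp only [conjTranspose_mul, Matrix.mul_assoc]
    _ = K := by simp [hQR]

theorem trans {K : Matrix ι ι B} {K' : Matrix κ κ B} {K'' : Matrix μ μ B}
    (h : StarCongruent K K') (h' : StarCongruent K' K'') : StarCongruent K K'' := by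
  obtain ⟨Q, R, hQR, hRQ, rfl⟩ := h
  obtain ⟨Q', R', hQR', hRQ', rfl⟩ := h'
  refine ⟨Q * Q', R' * R, ?_, ?_, ?_⟩
  · rw [Matrix.mul_assoc, ← Matrix.mul_assoc Q', hQR', Matrix.one_mul, hQR]
  · rw [Matrix.mul_assoc, ← Matrix.mul_assoc R, hRQ, Matrix.one_mul, hRQ']
  · simp only [conjTranspose_mul, Matrix.mul_assoc]

theorem submatrix (K : Matrix ι ι B) (e : κ ≃ ι) : StarCongruent K (K.submatrix e e) := by
  refine ⟨(1 : Matrix ι ι B).submatrix id e, (1 : Matrix ι ι B).submatrix e id, ?_, ?_, ?_⟩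
  · rw [Matrix.submatrix_mul_equiv]
    simp
  · rw [← Matrix.submatrix_mul _ _ _ _ _ Function.bijective_id]
    simp
  · ext i j
    simp [Matrix.mul_apply, Matrix.one_apply, apply_ite]

theorem fromBlocks {K : Matrix ι ι B} {K' : Matrix κ κ B} {L : Matrix μ μ B} {L' : Matrix ν ν B}
    (h : StarCongruent K K') (h' : StarCongruent L L') :
    StarCongruent (Matrix.fromBlocks K 0 0 L) (Matrix.fromBlocks K' 0 0 L') := by
  obtain ⟨Q, R, hQR, hRQ, rfl⟩ := h
  obtain ⟨Q', R', hQR', hRQ', rfl⟩ := h'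
  refine ⟨Matrix.fromBlocks Q 0 0 Q', Matrix.fromBlocks R 0 0 R', ?_, ?_, ?_⟩
  · simp [fromBlocks_multiply, hQR, hQR']
  · simp [fromBlocks_multiply, hRQ, hRQ']
  · simp [fromBlocks_multiply, fromBlocks_conjTranspose]

end Semiring

theorem conjTranspose_eq_neg [Ring B] [StarRing B] {K : Matrix ι ι B} {K' : Matrix κ κ B}
    (h : StarCongruent K K') (hK : Kᴴ = -K) : K'ᴴ = -K' := by
  obtain ⟨Q, R, -, -, rfl⟩ := h
  simp [conjTranspose_mul, hK, Matrix.mul_assoc]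

section CommRing

variable [CommRing B] [StarRing B]

theorem isUnit {K : Matrix ι ι B} {K' : Matrix κ κ B} (h : StarCongruent K K') (hK : IsUnit K) :
    IsUnit K' := by
  obtain ⟨Q, R, hQR, hRQ, rfl⟩ := h
  obtain ⟨L, hKL⟩ := hK.exists_right_inv
  refine IsUnit.of_mul_eq_one (R * L * Rᴴ) ?_
  calc Qᴴ * K * Q * (R * L * Rᴴ) = Qᴴ * (K * (Q * R * L)) * Rᴴ := by
        simp only [Matrix.mul_assoc]
    _ = (R * Q)ᴴ := by
        rw [hQR, Matrix.one_mul, hKL, Matrix.mul_one, conjTranspose_mul]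
    _ = 1 := by rw [hRQ, conjTranspose_one]

theorem of_isUnit_det (K : Matrix ι ι B) {Q : Matrix ι ι B} (hQ : IsUnit Q.det) :
    StarCongruent K (Qᴴ * K * Q) :=
  ⟨Q, Q⁻¹, mul_nonsing_inv _ hQ, nonsing_inv_mul _ hQ, rfl⟩

theorem schurComplement (W : Matrix ι ι B) (X : Matrix ι κ B) (Y : Matrix κ ι B)
    (Z : Matrix κ κ B) [Invertible W]
    (hskew : (Matrix.fromBlocks W X Y Z)ᴴ = -Matrix.fromBlocks W X Y Z) :
    StarCongruent (Matrix.fromBlocks W X Y Z)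
      (Matrix.fromBlocks W 0 0 (Z - Y * ⅟W * X)) := by
  rw [fromBlocks_conjTranspose, fromBlocks_neg, fromBlocks_inj] at hskew
  obtain ⟨hW, -, hX, -⟩ := hskew
  have hinv : (⅟W)ᴴ = -⅟W := by
    rw [invOf_eq_nonsing_inv, conjTranspose_nonsing_inv, hW]
    exact inv_eq_left_inv (by simp)
  have hadjoint : (⅟W * X)ᴴ = Y * ⅟W := by
    rw [conjTranspose_mul, hinv, hX, Matrix.neg_mul, Matrix.mul_neg, neg_neg]
  refine symm ⟨Matrix.fromBlocks 1 (⅟W * X) 0 1, Matrix.fromBlocks 1 (-(⅟W * X)) 0 1, ?_, ?_, ?_⟩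
  · simp [fromBlocks_multiply]
  · simp [fromBlocks_multiply]
  · rw [fromBlocks_eq_of_invertible₁₁ W X Y Z]
    simp only [fromBlocks_conjTranspose, conjTranspose_one, conjTranspose_zero, hadjoint]

end CommRing

end StarCongruent

section IsLocalRing

variable {B ι : Type*} [CommRing B] [IsLocalRing B] [Fintype ι] [DecidableEq ι]

theorem exists_isUnit_apply_of_isUnit {K : Matrix ι ι B} (hK : IsUnit K) (i : ι) :
    ∃ j, IsUnit (K i j) := by
  obtain ⟨L, hKL⟩ := hK.exists_right_inv
  by_contra! hrow
  have hone : ∑ j, K i j * L j i = 1 := by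
    rw [← Matrix.mul_apply, hKL, Matrix.one_apply_eq]
  refine (IsLocalRing.maximalIdeal.isMaximal B).ne_top (Ideal.eq_top_of_isUnit_mem _ ?_ isUnit_one)
  rw [← hone]
  exact Ideal.sum_mem _ fun j _ => Ideal.mul_mem_right _ _ (hrow j)

theorem isUnit_of_sub_mem_maximalIdeal {K L : Matrix ι ι B} (hK : IsUnit K)
    (hKL : ∀ i j, K i j - L i j ∈ IsLocalRing.maximalIdeal B) : IsUnit L := by
  have hres : (IsLocalRing.residue B).mapMatrix K = (IsLocalRing.residue B).mapMatrix L := by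
    ext i j
    exact Ideal.Quotient.eq.2 (hKL i j)
  rw [isUnit_iff_isUnit_det] at hK ⊢
  rwa [← isUnit_map_iff (IsLocalRing.residue B), RingHom.map_det, ← hres, ← RingHom.map_det,
    isUnit_map_iff]

variable [StarRing B]

theorem exists_isUnit_conjTranspose_eq_neg_of_isHermitian_smul (h2 : IsUnit (2 : B)) {p : B}
    (hp : p ≠ 0) (hp_skew : p ∈ skewAdjoint B) {K : Matrix ι ι B} (hK : IsUnit K)
    (hherm : (p • K).IsHermitian) :
    ∃ L : Matrix ι ι B, IsUnit L ∧ Lᴴ = -L ∧ p • L = p • K := by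
  let _ := h2.invertible
  have hhalf : star (⅟2 : B) = ⅟2 := by simp [star_invOf]
  have hanti : p • Kᴴ = -(p • K) := by
    rw [← hherm.eq, conjTranspose_smul, skewAdjoint.mem_iff.1 hp_skew, neg_smul, neg_neg]
  have hsmul : p • (⅟2 : B) • (K - Kᴴ) = p • K := by
    rw [smul_comm, smul_sub, hanti, sub_neg_eq_add, ← two_smul B, smul_smul, invOf_mul_self,
      one_smul]
  refine ⟨(⅟2 : B) • (K - Kᴴ), isUnit_of_sub_mem_maximalIdeal hK fun i j hunit => ?_, ?_, hsmul⟩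
  · have hkill : p • (K - (⅟2 : B) • (K - Kᴴ)) = 0 := by
      rw [smul_sub, hsmul, sub_self]
    exact hp (hunit.mul_left_eq_zero.1 (congrFun (congrFun hkill i) j))
  · rw [conjTranspose_smul, hhalf, conjTranspose_sub, conjTranspose_conjTranspose, ← smul_neg,
      neg_sub]

end IsLocalRing

/-- A local ring with involution that behaves like a ramified quadratic extension of a Henselian
local ring with `2` invertible: the skew elements reduce to zero in the residue field, and Hensel's
lemma provides a self-adjoint square root of `1 + a * b` for skew `a` and `b`. -/
class RamifiedStarRing (B : Type*) [CommRing B] [StarRing B] : Prop extends IsLocalRing B where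
  isUnit_two : IsUnit (2 : B)
  not_isUnit_of_mem_skewAdjoint : ∀ a ∈ skewAdjoint B, ¬IsUnit a
  exists_isSelfAdjoint_sq_eq : ∀ a ∈ skewAdjoint B, ∀ b ∈ skewAdjoint B,
    ∃ u : B, IsSelfAdjoint u ∧ u ^ 2 = 1 + a * b

/-- The Gram matrix of the skew-hermitian hyperbolic plane. -/
def hyperbolicPlane (B : Type*) [CommRing B] : Matrix (Fin 2) (Fin 2) B :=
  !![0, 1; -1, 0]

theorem isUnit_hyperbolicPlane (B : Type*) [CommRing B] : IsUnit (hyperbolicPlane B) := by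
  simp [isUnit_iff_isUnit_det, hyperbolicPlane]

section Plane

variable {B : Type*} [CommRing B] [StarRing B]

theorem starCongruent_fin_two {a b c d a' b' c' d' : B} (p q r s : B)
    (hdet : IsUnit (p * s - q * r))
    (h₀₀ : star p * a * p + star p * b * r + star r * c * p + star r * d * r = a')
    (h₀₁ : star p * a * q + star p * b * s + star r * c * q + star r * d * s = b')
    (h₁₀ : star q * a * p + star q * b * r + star s * c * p + star s * d * r = c')
    (h₁₁ : star q * a * q + star q * b * s + star s * c * q + star s * d * s = d') :
    StarCongruent !![a, b; c, d] !![a', b'; c', d'] := by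
  subst h₀₀ h₀₁ h₁₀ h₁₁
  convert StarCongruent.of_isUnit_det !![a, b; c, d] (Q := !![p, q; r, s])
    (by rwa [det_fin_two_of]) using 1
  ext i j
  fin_cases i <;> fin_cases j <;> simp [Matrix.mul_apply, Fin.sum_univ_two] <;> ring

theorem exists_starCongruent_plane_one_of_isUnit (a b : B) {u : B} (hu : IsUnit u) :
    ∃ c : B, StarCongruent !![a, u; -star u, b] !![a, 1; -1, c] := by
  obtain ⟨v, huv⟩ := hu.exists_right_inv
  have huv_star : star u * star v = 1 := by rw [← star_mul', huv, star_one]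
  have hv : IsUnit v := IsUnit.of_mul_eq_one_right u huv
  refine ⟨star v * b * v, starCongruent_fin_two 1 0 0 v (by simpa using hv) ?_ ?_ ?_ ?_⟩
  · simp
  · simp [huv]
  · simp [mul_comm (star v), huv_star]
  · simp

theorem starCongruent_hyperbolicPlane_of_isotropic (h2 : IsUnit (2 : B)) {b : B}
    (hb : b ∈ skewAdjoint B) : StarCongruent !![0, 1; -1, b] (hyperbolicPlane B) := by
  let _ := h2.invertible
  have hstar : star (⅟2 * b) = -(⅟2 * b) := by
    simp [star_invOf, skewAdjoint.mem_iff.1 hb]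
  refine starCongruent_fin_two 1 (⅟2 * b) 0 1 (by simp) (by simp) (by simp) (by simp) ?_
  rw [hstar, star_one]
  linear_combination -b * mul_invOf_self (2 : B)

/-- `(1, t)` is an isotropic vector of the plane `!![a, 1; -1, b]`. -/
theorem exists_isotropic_of_sq_eq [IsLocalRing B] (h2 : IsUnit (2 : B)) {a b u : B}
    (ha : a ∈ skewAdjoint B) (hu : IsSelfAdjoint u) (hsq : u ^ 2 = 1 + a * b) :
    ∃ t : B, a + t - star t + star t * t * b = 0 := by
  wlog hunit : IsUnit (1 + u) generalizing u
  · refine this hu.neg (by rw [neg_sq, hsq]) ?_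
    have hsum : IsUnit ((1 + u) + (1 + -u)) := by
      rwa [show (1 + u) + (1 + -u) = 2 by ring]
    exact (IsLocalRing.isUnit_or_isUnit_of_isUnit_add hsum).resolve_left hunit
  let _ := hunit.invertible
  set w := ⅟(1 + u)
  have hw : (1 + u) * w = 1 := mul_invOf_self _
  have hw_star : star w = w := by simp [w, star_invOf, hu.star_eq]
  refine ⟨-(a * w), ?_⟩
  rw [star_neg, star_mul', skewAdjoint.mem_iff.1 ha, hw_star]
  linear_combination a * w ^ 2 * hsq - a * (1 + (1 + u) * w - 2 * w) * hw

end Plane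

section Ramified

variable {B κ : Type*} [CommRing B] [StarRing B] [RamifiedStarRing B] [Fintype κ] [DecidableEq κ]

theorem isUnit_one_add_mul_of_mem_skewAdjoint (a : B) {b : B} (hb : b ∈ skewAdjoint B) :
    IsUnit (1 + a * b) :=
  (IsLocalRing.isUnit_or_isUnit_of_add_one (b := -(a * b)) (by ring)).resolve_right fun h =>
    RamifiedStarRing.not_isUnit_of_mem_skewAdjoint b hb
      (isUnit_of_mul_isUnit_right ((IsUnit.neg_iff _).1 h))

theorem starCongruent_plane_hyperbolicPlane {a b : B} (ha : a ∈ skewAdjoint B)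
    (hb : b ∈ skewAdjoint B) : StarCongruent !![a, 1; -1, b] (hyperbolicPlane B) := by
  have h2 : IsUnit (2 : B) := RamifiedStarRing.isUnit_two
  obtain ⟨u, hu, hsq⟩ := RamifiedStarRing.exists_isSelfAdjoint_sq_eq a ha b hb
  obtain ⟨t, ht⟩ := exists_isotropic_of_sq_eq h2 ha hu hsq
  have hskew : (!![a, 1; -1, b] : Matrix _ _ B)ᴴ = -!![a, 1; -1, b] := by
    ext i j
    fin_cases i <;> fin_cases j <;> simp [skewAdjoint.mem_iff.1 ha, skewAdjoint.mem_iff.1 hb]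
  have hisotropic : StarCongruent !![a, 1; -1, b]
      !![0, 1 + star t * b; -star (1 + star t * b), b] := by
    refine starCongruent_fin_two 1 0 t 1 (by simp) ?_ (by simp) ?_ (by simp)
    · rw [star_one]
      linear_combination ht
    · rw [star_add, star_mul', star_star, skewAdjoint.mem_iff.1 hb, star_zero, star_one]
      ring
  obtain ⟨c, hscale⟩ :=
    exists_starCongruent_plane_one_of_isUnit 0 b (isUnit_one_add_mul_of_mem_skewAdjoint (star t) hb)
  have hcongr := hisotropic.trans hscale
  have hc : c ∈ skewAdjoint B := by
    simpa [skewAdjoint.mem_iff] using congrFun (congrFun (hcongr.conjTranspose_eq_neg hskew) 1) 1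
  exact hcongr.trans (starCongruent_hyperbolicPlane_of_isotropic h2 hc)

theorem starCongruent_hyperbolicPlane {W : Matrix (Fin 2) (Fin 2) B} (hW : Wᴴ = -W)
    (hunit : IsUnit (W 0 1)) : StarCongruent W (hyperbolicPlane B) := by
  have hstar (i j : Fin 2) : star (W j i) = -W i j := congrFun (congrFun hW i) j
  obtain ⟨c, hscale⟩ := exists_starCongruent_plane_one_of_isUnit (W 0 0) (W 1 1) hunit
  have hW_eq : !![W 0 0, W 0 1; -star (W 0 1), W 1 1] = W := by
    rw [hstar, neg_neg, ← eta_fin_two]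
  rw [hW_eq] at hscale
  have hc : c ∈ skewAdjoint B := by
    simpa [skewAdjoint.mem_iff] using congrFun (congrFun (hscale.conjTranspose_eq_neg hW) 1) 1
  exact hscale.trans (starCongruent_plane_hyperbolicPlane (hstar 0 0) hc)

theorem exists_starCongruent_fromBlocks_of_isUnit_apply
    {K : Matrix (Fin 2 ⊕ κ) (Fin 2 ⊕ κ) B} (hK : Kᴴ = -K)
    (hunit : IsUnit (K (Sum.inl 0) (Sum.inl 1))) :
    ∃ S : Matrix κ κ B, StarCongruent K (fromBlocks (hyperbolicPlane B) 0 0 S) := by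
  have hplane : StarCongruent K.toBlocks₁₁ (hyperbolicPlane B) := by
    refine starCongruent_hyperbolicPlane ?_ hunit
    ext i j
    exact congrFun (congrFun hK (Sum.inl i)) (Sum.inl j)
  let _ : Invertible K.toBlocks₁₁ := (hplane.symm.isUnit (isUnit_hyperbolicPlane B)).invertible
  rw [← fromBlocks_toBlocks K] at hK ⊢
  exact ⟨_, (StarCongruent.schurComplement _ _ _ _ hK).trans (hplane.fromBlocks (.refl _))⟩

theorem exists_starCongruent_fromBlocks {K : Matrix (Fin 2 ⊕ κ) (Fin 2 ⊕ κ) B} (hK : Kᴴ = -K)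
    (hK_unit : IsUnit K) :
    ∃ S : Matrix κ κ B, StarCongruent K (fromBlocks (hyperbolicPlane B) 0 0 S) := by
  obtain ⟨j, hj⟩ := exists_isUnit_apply_of_isUnit hK_unit (Sum.inl 0)
  have hj_ne : j ≠ Sum.inl 0 := by
    rintro rfl
    exact RamifiedStarRing.not_isUnit_of_mem_skewAdjoint _
      (congrFun (congrFun hK (Sum.inl 0)) (Sum.inl 0)) hj
  let e : Equiv.Perm (Fin 2 ⊕ κ) := Equiv.swap (Sum.inl 1) j
  have he : e (Sum.inl 0) = Sum.inl 0 := Equiv.swap_apply_of_ne_of_ne (by simp) hj_ne.symm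
  have hperm := StarCongruent.submatrix K e
  obtain ⟨S, hS⟩ := exists_starCongruent_fromBlocks_of_isUnit_apply
    (hperm.conjTranspose_eq_neg hK) (by simpa [he, e] using hj)
  exact ⟨S, hperm.trans hS⟩

end Ramified

/-- The decomposition of `m + 1` copies of `n` into the first copy and the remaining `m`, indexed
as for `Matrix.blockDiagonal`. -/
def sumProdFinEquiv (n : Type*) (m : ℕ) : n ⊕ n × Fin m ≃ n × Fin (m + 1) where
  toFun := Sum.elim (fun i => (i, 0)) fun p => (p.1, p.2.succ)
  invFun p := Fin.cases (Sum.inl p.1) (fun j => Sum.inr (p.1, j)) p.2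
  left_inv := by rintro (i | ⟨i, j⟩) <;> simp
  right_inv := by
    rintro ⟨i, j⟩
    cases j using Fin.cases <;> simp

theorem blockDiagonal_submatrix_sumProdFinEquiv {n B : Type*} [Zero B] {m : ℕ}
    (M : Fin (m + 1) → Matrix n n B) :
    (blockDiagonal M).submatrix (sumProdFinEquiv n m) (sumProdFinEquiv n m) =
      fromBlocks (M 0) 0 0 (blockDiagonal fun k => M k.succ) := by
  ext (i | ⟨i, k⟩) (j | ⟨j, l⟩) <;>
    simp [sumProdFinEquiv, blockDiagonal_apply, (Fin.succ_ne_zero _).symm]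

theorem starCongruent_blockDiagonal_hyperbolicPlane {B : Type*} [CommRing B] [StarRing B]
    [RamifiedStarRing B] {m : ℕ} {K : Matrix (Fin 2 × Fin m) (Fin 2 × Fin m) B} (hK : Kᴴ = -K)
    (hK_unit : IsUnit K) : StarCongruent K (blockDiagonal fun _ : Fin m => hyperbolicPlane B) := by
  induction m with
  | zero =>
    rw [Subsingleton.elim (blockDiagonal _) K]
    exact .refl K
  | succ m ih =>
    let e := sumProdFinEquiv (Fin 2) m
    have hreindex := StarCongruent.submatrix K e
    obtain ⟨S, hS⟩ := exists_starCongruent_fromBlocks (hreindex.conjTranspose_eq_neg hK)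
      (hreindex.isUnit hK_unit)
    have hsplit := hreindex.trans hS
    have hS_skew : Sᴴ = -S := by
      have h := hsplit.conjTranspose_eq_neg hK
      rw [fromBlocks_conjTranspose, fromBlocks_neg, fromBlocks_inj] at h
      exact h.2.2.2
    have hS_unit : IsUnit S := (isUnit_fromBlocks_zero₂₁.1 (hsplit.isUnit hK_unit)).2
    have hblocks := hsplit.trans ((StarCongruent.refl _).fromBlocks (ih hS_skew hS_unit))
    rw [← blockDiagonal_submatrix_sumProdFinEquiv fun _ => hyperbolicPlane B] at hblocks
    exact hblocks.trans (StarCongruent.submatrix _ e).symm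

theorem exists_sq_eq_one_add_of_henselian {A : Type*} [CommRing A] (I : Ideal A)
    [HenselianRing A I] (h2 : IsUnit (2 : A)) {c : A} (hc : c ∈ I) : ∃ u : A, u ^ 2 = 1 + c := by
  have hderiv : IsUnit (Ideal.Quotient.mk I
      ((Polynomial.X ^ 2 - Polynomial.C (1 + c) : Polynomial A).derivative.eval 1)) := by
    simpa [one_add_one_eq_two] using h2.map (Ideal.Quotient.mk I)
  obtain ⟨u, hu, -⟩ := HenselianRing.is_henselian _
    (Polynomial.monic_X_pow_sub_C (1 + c) two_ne_zero) 1 (by simpa using hc) hderiv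
  exact ⟨u, by simpa [Polynomial.IsRoot, sub_eq_zero] using hu⟩

namespace ramPoly

open AdjoinRoot

variable {A : Type*} [CommRing A] {ϖ : A}

theorem monic (ϖ : A) : (ramPoly ϖ).Monic :=
  Polynomial.monic_X_pow_sub_C ϖ two_ne_zero

theorem natDegree_eq_two [Nontrivial A] (ϖ : A) : (ramPoly ϖ).natDegree = 2 :=
  Polynomial.natDegree_X_pow_sub_C

theorem root_sq (ϖ : A) : root (ramPoly ϖ) ^ 2 = of (ramPoly ϖ) ϖ := by
  have h : (Polynomial.X ^ 2 - Polynomial.C ϖ).eval₂ (of (ramPoly ϖ)) (root (ramPoly ϖ)) = 0 :=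
    eval₂_root _
  rwa [Polynomial.eval₂_sub, Polynomial.eval₂_X_pow, Polynomial.eval₂_C, sub_eq_zero] at h

theorem root_ne_zero [Nontrivial A] (ϖ : A) : root (ramPoly ϖ) ≠ 0 :=
  mk_ne_zero_of_natDegree_lt (monic ϖ) Polynomial.X_ne_zero (by simp [natDegree_eq_two])

theorem exists_eq_of_add_root_mul_of (x : AdjoinRoot (ramPoly ϖ)) :
    ∃ a b : A, x = of (ramPoly ϖ) a + root (ramPoly ϖ) * of (ramPoly ϖ) b := by
  induction x using AdjoinRoot.induction_on with | ih p => ?_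
  obtain ⟨b, a, hrem⟩ : ∃ b a, p %ₘ ramPoly ϖ = Polynomial.C b * Polynomial.X + Polynomial.C a := by
    nontriviality A
    refine Polynomial.exists_eq_X_add_C_of_natDegree_le_one (Nat.lt_succ_iff.1 ?_)
    have hdegree := natDegree_eq_two ϖ
    exact (Polynomial.natDegree_modByMonic_lt p (monic ϖ) fun h => by simp [h] at hdegree).trans_eq
      hdegree
  refine ⟨a, b, ?_⟩
  rw [← Polynomial.modByMonic_add_div p (ramPoly ϖ), hrem]
  simp only [map_add, map_mul, mk_self, mk_C, mk_X, zero_mul, add_zero]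
  ring

theorem isUnit_of_add_root_mul_of_iff [IsLocalRing A] (hϖ : ϖ ∈ IsLocalRing.maximalIdeal A)
    (a b : A) :
    IsUnit (of (ramPoly ϖ) a + root (ramPoly ϖ) * of (ramPoly ϖ) b) ↔ IsUnit a := by
  constructor <;> intro h
  · let reduction : AdjoinRoot (ramPoly ϖ) →+* IsLocalRing.ResidueField A :=
      lift (IsLocalRing.residue A) 0 (by simpa [ramPoly] using hϖ)
    exact (isUnit_map_iff (IsLocalRing.residue A) a).1 (by simpa [reduction] using h.map reduction)
  · have hnorm : (of (ramPoly ϖ) a + root (ramPoly ϖ) * of (ramPoly ϖ) b) *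
        (of (ramPoly ϖ) a - root (ramPoly ϖ) * of (ramPoly ϖ) b) =
          of (ramPoly ϖ) (a ^ 2 - ϖ * b ^ 2) := by
      simp only [map_sub, map_mul, map_pow, ← root_sq]
      ring
    have hnorm_unit : IsUnit (a ^ 2 - ϖ * b ^ 2) := by
      rw [← isUnit_map_iff (IsLocalRing.residue A)]
      simpa [(IsLocalRing.residue_eq_zero_iff ϖ).2 hϖ] using h
    exact isUnit_of_mul_isUnit_left (hnorm ▸ hnorm_unit.map (of (ramPoly ϖ)))

theorem isLocalRing [IsLocalRing A] (hϖ : ϖ ∈ IsLocalRing.maximalIdeal A) :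
    IsLocalRing (AdjoinRoot (ramPoly ϖ)) := by
  have : Nontrivial (AdjoinRoot (ramPoly ϖ)) := nontrivial_of_ne _ _ (root_ne_zero ϖ)
  refine IsLocalRing.of_isUnit_or_isUnit_of_isUnit_add fun x y hxy => ?_
  obtain ⟨a, b, rfl⟩ := exists_eq_of_add_root_mul_of x
  obtain ⟨c, d, rfl⟩ := exists_eq_of_add_root_mul_of y
  rw [add_add_add_comm, ← mul_add, ← map_add, ← map_add, isUnit_of_add_root_mul_of_iff hϖ] at hxy
  simpa only [isUnit_of_add_root_mul_of_iff hϖ] using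
    IsLocalRing.isUnit_or_isUnit_of_isUnit_add hxy

variable {σ : AdjoinRoot (ramPoly ϖ) ≃ₐ[A] AdjoinRoot (ramPoly ϖ)}

theorem conj_of_add_root_mul_of (hσ : σ (root (ramPoly ϖ)) = -root (ramPoly ϖ)) (a b : A) :
    σ (of (ramPoly ϖ) a + root (ramPoly ϖ) * of (ramPoly ϖ) b) =
      of (ramPoly ϖ) a - root (ramPoly ϖ) * of (ramPoly ϖ) b := by
  have hσ_of (c : A) : σ (of (ramPoly ϖ) c) = of (ramPoly ϖ) c := σ.commutes c
  rw [map_add, map_mul, hσ, hσ_of, hσ_of, neg_mul, sub_eq_add_neg]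

theorem conj_involutive (hσ : σ (root (ramPoly ϖ)) = -root (ramPoly ϖ)) :
    Function.Involutive σ := by
  intro x
  obtain ⟨a, b, rfl⟩ := exists_eq_of_add_root_mul_of x
  have h := conj_of_add_root_mul_of hσ a (-b)
  rw [map_neg, mul_neg, ← sub_eq_add_neg, sub_neg_eq_add] at h
  rw [conj_of_add_root_mul_of hσ, h]

theorem exists_eq_root_mul_of_of_conj_eq_neg (h2 : IsUnit (2 : A))
    (hσ : σ (root (ramPoly ϖ)) = -root (ramPoly ϖ)) {x : AdjoinRoot (ramPoly ϖ)}
    (hx : σ x = -x) : ∃ b : A, x = root (ramPoly ϖ) * of (ramPoly ϖ) b := by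
  obtain ⟨a, b, rfl⟩ := exists_eq_of_add_root_mul_of x
  rw [conj_of_add_root_mul_of hσ] at hx
  have h2a : of (ramPoly ϖ) 2 * of (ramPoly ϖ) a = 0 := by
    rw [map_ofNat]
    linear_combination hx
  exact ⟨b, by rw [(h2.map (of (ramPoly ϖ))).mul_right_eq_zero.1 h2a, zero_add]⟩

/-- The involution `π ↦ -π` of `A[X]/(X² - ϖ)` as the star operation, so that `conjTranspose` is
the hermitian adjoint. -/
noncomputable abbrev starRing (hσ : σ (root (ramPoly ϖ)) = -root (ramPoly ϖ)) :
    StarRing (AdjoinRoot (ramPoly ϖ)) where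
  star := σ
  star_involutive := conj_involutive hσ
  star_mul x y := by rw [map_mul, mul_comm]
  star_add := map_add σ

theorem ramifiedStarRing [IsLocalRing A] [HenselianRing A (Ideal.span {ϖ})] (h2 : IsUnit (2 : A))
    (hσ : σ (root (ramPoly ϖ)) = -root (ramPoly ϖ)) :
    letI := starRing hσ
    RamifiedStarRing (AdjoinRoot (ramPoly ϖ)) := by
  let _ := starRing hσ
  have hϖ_span : ϖ ∈ Ideal.span {ϖ} := Ideal.mem_span_singleton_self ϖ
  have hϖ : ϖ ∈ IsLocalRing.maximalIdeal A := by
    rw [← IsLocalRing.jacobson_eq_maximalIdeal ⊥ bot_ne_top]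
    exact HenselianRing.jac hϖ_span
  exact
    { isLocalRing hϖ with
      isUnit_two := map_ofNat (of (ramPoly ϖ)) 2 ▸ h2.map (of (ramPoly ϖ))
      not_isUnit_of_mem_skewAdjoint := by
        intro x hx
        obtain ⟨b, rfl⟩ := exists_eq_root_mul_of_of_conj_eq_neg h2 hσ hx
        have h := isUnit_of_add_root_mul_of_iff hϖ 0 b
        rw [map_zero, zero_add] at h
        simp [h]
      exists_isSelfAdjoint_sq_eq := by
        intro x hx y hy
        obtain ⟨a, rfl⟩ := exists_eq_root_mul_of_of_conj_eq_neg h2 hσ hx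
        obtain ⟨b, rfl⟩ := exists_eq_root_mul_of_of_conj_eq_neg h2 hσ hy
        obtain ⟨u, hu⟩ := exists_sq_eq_one_add_of_henselian (Ideal.span {ϖ}) h2
          (Ideal.mul_mem_right (a * b) _ hϖ_span)
        refine ⟨of (ramPoly ϖ) u, σ.commutes u, ?_⟩
        rw [← map_pow, hu, map_add, map_one, map_mul, map_mul, ← root_sq]
        ring }

end ramPoly

theorem pi_modular_hermitian_hyperbolic_general
    (A : Type*) [CommRing A] [IsLocalRing A] (h2 : IsUnit (2 : A))
    (ϖ : A) [HenselianRing A (Ideal.span {ϖ})]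
    (σ : AdjoinRoot (ramPoly ϖ) ≃ₐ[A] AdjoinRoot (ramPoly ϖ))
    (hσ : σ (AdjoinRoot.root (ramPoly ϖ)) = -AdjoinRoot.root (ramPoly ϖ))
    (m : ℕ)
    (G : Matrix (Fin 2 × Fin m) (Fin 2 × Fin m) (AdjoinRoot (ramPoly ϖ)))
    (hherm : (G.map σ)ᵀ = G)
    (hmod : ∃ G₀ : Matrix (Fin 2 × Fin m) (Fin 2 × Fin m) (AdjoinRoot (ramPoly ϖ)),
      IsUnit G₀ ∧ G = AdjoinRoot.root (ramPoly ϖ) • G₀) :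
    ∃ P : Matrix (Fin 2 × Fin m) (Fin 2 × Fin m) (AdjoinRoot (ramPoly ϖ)),
      IsUnit P ∧
      Pᵀ * G * P.map σ =
        Matrix.blockDiagonal fun _ : Fin m =>
          !![0, AdjoinRoot.root (ramPoly ϖ); -AdjoinRoot.root (ramPoly ϖ), 0] := by
  let _ := ramPoly.starRing hσ
  have := ramPoly.ramifiedStarRing h2 hσ
  obtain ⟨G₀, hG₀, rfl⟩ := hmod
  obtain ⟨K, hK_unit, hK_skew, hK⟩ := exists_isUnit_conjTranspose_eq_neg_of_isHermitian_smul
    RamifiedStarRing.isUnit_two (ramPoly.root_ne_zero ϖ) hσ hG₀ hherm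
  obtain ⟨Q, R, hQR, -, hQ⟩ := starCongruent_blockDiagonal_hyperbolicPlane hK_skew hK_unit
  have hQ_conj : (Q.map σ).map σ = Q := by
    ext i j
    exact ramPoly.conj_involutive hσ (Q i j)
  refine ⟨Q.map σ, ?_, ?_⟩
  · exact (IsUnit.of_mul_eq_one R hQR).map (σ : _ →+* AdjoinRoot (ramPoly ϖ)).mapMatrix
  · change Qᴴ * _ * _ = _
    rw [hQ_conj, ← hK, Matrix.mul_smul, Matrix.smul_mul, hQ, ← blockDiagonal_smul]
    congr 1
    ext k i j
    fin_cases i <;> fin_cases j <;> simp [hyperbolicPlane]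

/-- Every π-modular σ-hermitian form of even rank over `B = A[X]/(X² - ϖ)` (with `A` a
ϖ-adically complete local ring in which 2 is invertible, `ϖ` a nonzerodivisor in the
maximal ideal, and `σ` the `A`-involution with `σ(π) = -π`) admits a hyperbolic basis:
there is an invertible `P` with `ᵗP·G·P̄` block diagonal with blocks `[[0, π],[-π, 0]]`. -/
theorem pi_modular_hermitian_hyperbolic
    (A : Type*) [CommRing A] [IsLocalRing A] (h2 : IsUnit (2 : A))
    (ϖ : A) (hreg : ϖ ∈ nonZeroDivisors A) (hmem : ϖ ∈ IsLocalRing.maximalIdeal A)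
    [IsAdicComplete (Ideal.span {ϖ}) A]
    (σ : AdjoinRoot (ramPoly ϖ) ≃ₐ[A] AdjoinRoot (ramPoly ϖ))
    (hσ : σ (AdjoinRoot.root (ramPoly ϖ)) = -AdjoinRoot.root (ramPoly ϖ))
    (m : ℕ) (hm : 1 ≤ m)
    (G : Matrix (Fin 2 × Fin m) (Fin 2 × Fin m) (AdjoinRoot (ramPoly ϖ)))
    (hherm : (G.map σ)ᵀ = G)
    (hmod : ∃ G₀ : Matrix (Fin 2 × Fin m) (Fin 2 × Fin m) (AdjoinRoot (ramPoly ϖ)),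
      IsUnit G₀ ∧ G = AdjoinRoot.root (ramPoly ϖ) • G₀) :
    ∃ P : Matrix (Fin 2 × Fin m) (Fin 2 × Fin m) (AdjoinRoot (ramPoly ϖ)),
      IsUnit P ∧
      Pᵀ * G * P.map σ =
        Matrix.blockDiagonal fun _ : Fin m =>
          !![0, AdjoinRoot.root (ramPoly ϖ); -AdjoinRoot.root (ramPoly ϖ), 0] :=
  pi_modular_hermitian_hyperbolic_general A h2 ϖ σ hσ m G hherm hmod
end
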